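/- For every θ ∈ Θ_M° and every x ∈ ℝ, the score functions ℓ_{θi}(x;θ) = f_{θi}(x;θ)/f(x;θ), their x-derivatives ℓ_{θi}'(x;θ) = ∂ℓ_{θi}/∂x, and their parameter derivatives ℓ_{θiθj}(x;θ) = ∂ℓ_{θi}/∂θ_j (i,j ∈ {1,2,3,4}) are well-defined, and all of these functions are jointly continuous in (x,θ) on ℝ × Θ_M°. -/

import Mathlib

open MeasureTheory Filter

noncomputable section

def ThetaInt : Set (Fin 4 → ℝ) :=
  {θ | 0 < θ 1 ∧ θ 2 ∈ Set.Ioo (0:ℝ) 2 ∧ θ 3 ∈ Set.Ioo (-1:ℝ) 1}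

/-- Cumulant (log characteristic function) of the continuous (M₀) parameterization,
with `θ = (μ, σ, α, β)`. -/
def psiM (θ : Fin 4 → ℝ) (t : ℝ) : ℂ :=
  if θ 2 = 1 then
    ((-(|θ 1 * t|) : ℝ) : ℂ)
      - Complex.I * (((2 * θ 3 / Real.pi) * (θ 1 * t) * Real.log |θ 1 * t| : ℝ) : ℂ)
      + Complex.I * ((θ 0 * t : ℝ) : ℂ)
  else
    ((-(|θ 1 * t| ^ (θ 2)) : ℝ) : ℂ) *
        (1 + Complex.I * ((θ 3 * Real.sign t * Real.tan (Real.pi * θ 2 / 2)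
            * (|θ 1 * t| ^ (1 - θ 2) - 1) : ℝ) : ℂ))
      + Complex.I * ((θ 0 * t : ℝ) : ℂ)

/-- Characteristic function of the (M₀) parameterization. -/
def phiM (θ : Fin 4 → ℝ) (t : ℝ) : ℂ := Complex.exp (psiM θ t)

/-- Stable density in the (M₀) parameterization, via Fourier inversion. -/
def fM (θ : Fin 4 → ℝ) (x : ℝ) : ℝ :=
  (1 / (2 * Real.pi)) *
    (∫ t : ℝ, Complex.exp (-Complex.I * (t : ℂ) * (x : ℂ)) * phiM θ t).re

/-- Partial derivative of the density in parameter `i`. -/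
def fP (i : Fin 4) (θ : Fin 4 → ℝ) (x : ℝ) : ℝ :=
  deriv (fun s => fM (Function.update θ i s) x) (θ i)

/-- Second partial derivative of the density in parameters `i`, `j`. -/
def fPP (i j : Fin 4) (θ : Fin 4 → ℝ) (x : ℝ) : ℝ :=
  deriv (fun s => fP i (Function.update θ j s) x) (θ j)

/-- Derivative of the density in `x`. -/
def fX (θ : Fin 4 → ℝ) (x : ℝ) : ℝ := deriv (fun y => fM θ y) x

/-- Mixed derivative `∂²f/∂x∂θᵢ`. -/
def fPX (i : Fin 4) (θ : Fin 4 → ℝ) (x : ℝ) : ℝ := deriv (fun y => fP i θ y) x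

/-- Score functions. -/
def ellP (i : Fin 4) (θ : Fin 4 → ℝ) (x : ℝ) : ℝ := fP i θ x / fM θ x

/-- Derivative of the score in `x`. -/
def ellPX (i : Fin 4) (θ : Fin 4 → ℝ) (x : ℝ) : ℝ := deriv (fun y => ellP i θ y) x

/-- Derivative of the score `ℓ_{θᵢ}` in the parameter `θⱼ`. -/
def ellPP (i j : Fin 4) (θ : Fin 4 → ℝ) (x : ℝ) : ℝ :=
  deriv (fun s => ellP i (Function.update θ j s) x) (θ j)

/-- `h = O(r)` as `|x| → ∞`. -/
def IsBigOAtInfty (h r : ℝ → ℝ) : Prop :=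
  ∃ c > 0, ∃ M > 0, ∀ x : ℝ, M ≤ |x| → |h x| ≤ c * r x


end

open scoped Topology

/-!
*Smoothness.* On the half-line `t > 0` the substitution `t = e ^ s` turns the `M₀` phase
`(t ^ (1 - α) - 1) tan (π α / 2)` into an expression in `∫ x in 0..1, e ^ (z x)`, which is smooth
across the apparent singularity at `α = 1`. The Fourier integrand is therefore jointly smooth in
`(x, θ)`, with derivatives dominated locally uniformly, and one differentiates under the integral.

*Positivity.* A Mellin integral writes the stable exponent as an integral over rates `r > 0` of
compensated compound-Poisson exponents with two-sided exponential jumps. The rates `r ≤ 1`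
contribute `ν̂ - mass - drift` for a finite measure `ν` of full support; the rates `r > 1`
contribute a function `g` whose Fourier transform is nonnegative (truncate to `r ≤ R` and
regularise by a Gaussian) and does not vanish identically. The density is thus a positive multiple
of the Fourier transform of `exp(ν̂) g`, and the linear term of the exponential series already
gives the lower bound `ν * ĝ > 0`.
-/

section ParametricIntegral

universe u

variable {Z : Type*} [NormedAddCommGroup Z] [NormedSpace ℝ Z] [MeasurableSpace Z]
  [OpensMeasurableSpace Z] [SecondCountableTopology Z] {μ : Measure Z}
  {H E : Type u} [NormedAddCommGroup H] [NormedSpace ℝ H]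
  [NormedAddCommGroup E] [NormedSpace ℝ E]

theorem hasFDerivAt_integral_of_contDiff_of_dominated {K : Z → H → E} {p₀ : H} {V : Set H}
    {bound : Z → ℝ} (hK : ContDiff ℝ 1 (Function.uncurry K)) (hV : V ∈ 𝓝 p₀)
    (hbound : Integrable bound μ)
    (hle : ∀ᵐ z ∂μ, ∀ p ∈ V, ‖K z p‖ ≤ bound z ∧ ‖fderiv ℝ (K z) p‖ ≤ bound z) :
    HasFDerivAt (fun p => ∫ z, K z p ∂μ) (∫ z, fderiv ℝ (K z) p₀ ∂μ) p₀ := by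
  have hmeas : ∀ p, AEStronglyMeasurable (fun z => K z p) μ := fun p =>
    (hK.continuous.comp (Continuous.prodMk_left p)).aestronglyMeasurable
  have hmeas' : AEStronglyMeasurable (fun z => fderiv ℝ (K z) p₀) μ :=
    (hK.fderiv (n := 0) contDiff_const (by simp)).continuous.aestronglyMeasurable
  have hdiff : ∀ z, Differentiable ℝ (K z) := fun z =>
    (hK.comp (contDiff_prodMk_right z)).differentiable one_ne_zero
  refine hasFDerivAt_integral_of_dominated_of_fderiv_le hV (.of_forall hmeas) ?_ hmeas'
    (hle.mono fun z hz p hp => (hz p hp).2) hbound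
    (.of_forall fun z p _ => (hdiff z p).hasFDerivAt)
  exact hbound.mono' (hmeas p₀) (hle.mono fun z hz => (hz p₀ (mem_of_mem_nhds hV)).1)

-- The induction passes from `E` to `H →L[ℝ] E`, so `H` and `E` share a universe.
theorem contDiffOn_integral_of_dominated (n : ℕ) {U : Set H} (hU : IsOpen U) {K : Z → H → E}
    (hK : ContDiff ℝ n (Function.uncurry K))
    (hdom : ∀ p₀ ∈ U, ∃ V ∈ 𝓝 p₀, ∃ bound : Z → ℝ, Integrable bound μ ∧
      ∀ᵐ z ∂μ, ∀ p ∈ V, ∀ k ≤ n, ‖iteratedFDeriv ℝ k (K z) p‖ ≤ bound z) :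
    ContDiffOn ℝ n (fun p => ∫ z, K z p ∂μ) U := by
  induction n generalizing E with
  | zero =>
    refine contDiffOn_zero.2 fun p₀ hp₀ => ContinuousAt.continuousWithinAt ?_
    obtain ⟨V, hV, bound, hbound, hle⟩ := hdom p₀ hp₀
    have hcont : Continuous (Function.uncurry K) := hK.continuous
    refine continuousAt_of_dominated (bound := bound)
      (.of_forall fun p => (hcont.comp (.prodMk_left p)).aestronglyMeasurable) ?_ hbound
      (.of_forall fun z => (hcont.comp (.prodMk_right z)).continuousAt)
    filter_upwards [hV] with p hp
    exact hle.mono fun z hz => by simpa using hz p hp 0 le_rfl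
  | succ n ih =>
    have hderiv : ∀ p₀ ∈ U, HasFDerivAt (fun p => ∫ z, K z p ∂μ)
        (∫ z, fderiv ℝ (K z) p₀ ∂μ) p₀ := by
      intro p₀ hp₀
      obtain ⟨V, hV, bound, hbound, hle⟩ := hdom p₀ hp₀
      refine hasFDerivAt_integral_of_contDiff_of_dominated (hK.of_le (by simp)) hV hbound
        (hle.mono fun z hz p hp => ⟨?_, ?_⟩)
      · simpa using hz p hp 0 (by lia)
      · simpa using hz p hp 1 (by lia)
    have hsmooth : ContDiffOn ℝ n (fun p => ∫ z, fderiv ℝ (K z) p ∂μ) U := by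
      refine ih ?_ fun p₀ hp₀ => ?_
      · exact ContDiff.fderiv (f := fun q : Z × H => K q.1) (n := n)
          (hK.comp (contDiff_fst.fst.prodMk contDiff_snd)) contDiff_snd (by simp)
      · obtain ⟨V, hV, bound, hbound, hle⟩ := hdom p₀ hp₀
        refine ⟨V, hV, bound, hbound, hle.mono fun z hz p hp k hk => ?_⟩
        rw [norm_iteratedFDeriv_fderiv]
        exact hz p hp (k + 1) (by lia)
    rw [Nat.cast_succ, contDiffOn_succ_iff_fderiv_of_isOpen hU]
    exact ⟨fun p hp => (hderiv p hp).differentiableAt.differentiableWithinAt, by simp,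
      hsmooth.congr fun p hp => (hderiv p hp).fderiv⟩

end ParametricIntegral

section IteratedDerivativeBounds

variable {H F : Type*} [NormedAddCommGroup H] [NormedSpace ℝ H]
  [NormedAddCommGroup F] [NormedSpace ℝ F]

theorem norm_iteratedFDeriv_comp_clm_le {n : ℕ} {q : ℝ → F} (hq : ContDiff ℝ n q) (l : H →L[ℝ] ℝ)
    (p : H) :
    ‖iteratedFDeriv ℝ n (fun p => q (l p)) p‖ ≤ ‖l‖ ^ n * ‖iteratedDeriv n q (l p)‖ := by
  have hcomp := l.iteratedFDeriv_comp_right hq p le_rfl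
  rw [Function.comp_def] at hcomp
  rw [hcomp, mul_comm, ← norm_iteratedFDeriv_eq_norm_iteratedDeriv]
  simpa using ContinuousMultilinearMap.norm_compContinuousLinearMap_le
    (iteratedFDeriv ℝ n q (l p)) fun _ => l

theorem norm_iteratedFDeriv_clm_le (n : ℕ) (l : H →L[ℝ] F) (p : H) :
    ‖iteratedFDeriv ℝ n l p‖ ≤ ‖l‖ * (1 + ‖p‖) := by
  match n with
  | 0 => simpa using (l.le_opNorm p).trans (by gcongr; linarith)
  | 1 =>
    rw [norm_iteratedFDeriv_one, l.fderiv]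
    exact le_mul_of_one_le_right (norm_nonneg l) (by simp)
  | n + 2 =>
    rw [← norm_iteratedFDeriv_fderiv, show fderiv ℝ l = fun _ => l from funext fun _ => l.fderiv,
      iteratedFDeriv_const_of_ne n.succ_ne_zero]
    simpa using by positivity

theorem norm_iteratedFDeriv_mul_le_of_le {n : ℕ} {f g : H → ℝ} (hf : ContDiff ℝ n f)
    (hg : ContDiff ℝ n g) (p : H) {A B : ℝ} (hA : ∀ i ≤ n, ‖iteratedFDeriv ℝ i f p‖ ≤ A)
    (hB : ∀ i ≤ n, ‖iteratedFDeriv ℝ i g p‖ ≤ B) :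
    ‖iteratedFDeriv ℝ n (fun p => f p * g p) p‖ ≤ 2 ^ n * (A * B) := by
  have hA0 : 0 ≤ A := (norm_nonneg _).trans (hA 0 n.zero_le)
  refine (norm_iteratedFDeriv_mul_le hf hg p le_rfl).trans ?_
  calc _ ≤ ∑ i ∈ Finset.range (n + 1), (n.choose i : ℝ) * (A * B) := by
        refine Finset.sum_le_sum fun i hi => ?_
        rw [mul_assoc]
        gcongr
        · exact hA i (Finset.mem_range_succ_iff.1 hi)
        · exact hB (n - i) (n.sub_le i)
    _ = 2 ^ n * (A * B) := by
        rw [← Finset.sum_mul]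
        exact_mod_cast congrArg (fun m : ℕ => (m : ℝ) * (A * B)) n.sum_range_choose

theorem norm_iteratedFDeriv_comp_le_of_le (n : ℕ) {g : ℝ → ℝ} {f : H → ℝ} (hg : ContDiff ℝ n g)
    (hf : ContDiff ℝ n f) (x : H) {C D : ℝ} (hD : 1 ≤ D)
    (hgC : ∀ i ≤ n, |iteratedDeriv i g (f x)| ≤ C) (hfD : ∀ i ≤ n, ‖iteratedFDeriv ℝ i f x‖ ≤ D) :
    ∀ i ≤ n, ‖iteratedFDeriv ℝ i (fun x => g (f x)) x‖ ≤ n.factorial * C * D ^ n := by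
  intro i hi
  have hin : (i : WithTop ℕ∞) ≤ n := by exact_mod_cast hi
  have hC : 0 ≤ C := (abs_nonneg _).trans (hgC 0 n.zero_le)
  calc _ ≤ i.factorial * C * D ^ i := by
        refine norm_iteratedFDeriv_comp_le hg hf hin x (fun j hj => ?_) fun j hj hji => ?_
        · rw [norm_iteratedFDeriv_eq_norm_iteratedDeriv]
          exact hgC j (hj.trans hi)
        · exact (hfD j (hji.trans hi)).trans (le_self_pow₀ hD (by lia))
    _ ≤ n.factorial * C * D ^ n := by
        gcongr

end IteratedDerivativeBounds

section ExpAverage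

/-- The mean `∫₀¹ exp (z * x) dx` of the exponential, that is the entire extension of
`(exp z - 1) / z`. -/
noncomputable def expAverage : ℝ → ℝ :=
  ProbabilityTheory.mgf id (volume.restrict (Set.Icc (0 : ℝ) 1))

theorem mem_integrableExpSet_restrict_Icc (z : ℝ) :
    z ∈ ProbabilityTheory.integrableExpSet id (volume.restrict (Set.Icc (0 : ℝ) 1)) :=
  Continuous.integrableOn_Icc (f := fun x : ℝ => Real.exp (z * x)) (by fun_prop)

theorem mem_interior_integrableExpSet_restrict_Icc (z : ℝ) : z ∈ interior
    (ProbabilityTheory.integrableExpSet id (volume.restrict (Set.Icc (0 : ℝ) 1))) := by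
  rw [Set.eq_univ_of_forall mem_integrableExpSet_restrict_Icc, interior_univ]
  exact Set.mem_univ z

theorem contDiff_expAverage {n : WithTop ℕ∞} : ContDiff ℝ n expAverage :=
  contDiff_iff_contDiffAt.2 fun z => (ProbabilityTheory.analyticAt_mgf
    (mem_interior_integrableExpSet_restrict_Icc z)).contDiffAt

theorem abs_iteratedDeriv_expAverage_le (n : ℕ) (z : ℝ) :
    |iteratedDeriv n expAverage z| ≤ 1 + Real.exp z := by
  have hle : ∀ x ∈ Set.Icc (0 : ℝ) 1, ‖x ^ n * Real.exp (z * x)‖ ≤ 1 + Real.exp z := by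
    intro x ⟨hx0, hx1⟩
    have hpow : ‖x ^ n‖ ≤ 1 := by
      rw [norm_pow, Real.norm_of_nonneg hx0]
      exact pow_le_one₀ hx0 hx1
    have hexp : Real.exp (z * x) ≤ 1 + Real.exp z := by
      rcases le_total 0 z with hz | hz
      · have := Real.exp_le_exp.2 (mul_le_of_le_one_right hz hx1)
        linarith
      · have := Real.exp_le_one_iff.2 (mul_nonpos_of_nonpos_of_nonneg hz hx0)
        linarith [Real.exp_pos z]
    rw [norm_mul, Real.norm_of_nonneg (Real.exp_pos _).le]
    exact (mul_le_of_le_one_left (Real.exp_pos _).le hpow).trans hexp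
  rw [expAverage, ProbabilityTheory.iteratedDeriv_mgf
    (mem_interior_integrableExpSet_restrict_Icc z), ← Real.norm_eq_abs]
  simpa using norm_setIntegral_le_of_norm_le_const (μ := volume) (by simp) hle

theorem mul_expAverage (z : ℝ) : z * expAverage z = Real.exp z - 1 := by
  have hint : expAverage z = ∫ x in (0 : ℝ)..1, Real.exp (z * x) := by
    rw [intervalIntegral.integral_of_le zero_le_one, ← integral_Icc_eq_integral_Ioc]
    rfl
  rw [hint, ← smul_eq_mul, intervalIntegral.smul_integral_comp_mul_left, integral_exp]
  simp

theorem expAverage_zero : expAverage 0 = 1 := by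
  simp [expAverage, ProbabilityTheory.mgf]

end ExpAverage

section StableKernel

/-- The phase of the stable Fourier integral at frequency `exp s`. The triple `p = (y, a, c)`
consists of a standardised location, the index and the (regularised) skewness coefficient. -/
noncomputable def stablePhase (s : ℝ) (p : ℝ × ℝ × ℝ) : ℝ :=
  p.1 * Real.exp s + p.2.2 * (s * Real.exp s * expAverage (s * p.2.1 - s))

/-- The integrand of the stable Fourier integral at frequency `exp s`. -/
noncomputable def stableKernel (s : ℝ) (p : ℝ × ℝ × ℝ) : ℝ :=
  Real.exp (-Real.exp (s * p.2.1)) * Real.cos (stablePhase s p)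

theorem contDiff_stablePhase {n : WithTop ℕ∞} :
    ContDiff ℝ n (Function.uncurry stablePhase) := by
  have := contDiff_expAverage (n := n)
  unfold stablePhase Function.uncurry
  fun_prop

theorem contDiff_stableKernel {n : WithTop ℕ∞} :
    ContDiff ℝ n (Function.uncurry stableKernel) := by
  have : ContDiff ℝ n fun q : ℝ × ℝ × ℝ × ℝ => stablePhase q.1 q.2 := contDiff_stablePhase
  unfold stableKernel Function.uncurry
  fun_prop

/-- A common bound for the derivatives of order at most `n` of the modulus and phase of
`stableKernel s` on the ball of radius `R`. -/
noncomputable def stableKernelGrowth (n : ℕ) (R s : ℝ) : ℝ :=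
  2 ^ n * (1 + R) * (1 + |s|) ^ (n + 1) * (1 + Real.exp s) ^ 2

theorem norm_proj_index_le : ‖(ContinuousLinearMap.fst ℝ ℝ ℝ).comp
    (ContinuousLinearMap.snd ℝ ℝ (ℝ × ℝ))‖ ≤ 1 :=
  (ContinuousLinearMap.opNorm_comp_le _ _).trans (mul_le_one₀
    (ContinuousLinearMap.norm_fst_le ..) (norm_nonneg _) (ContinuousLinearMap.norm_snd_le ..))

theorem norm_proj_skewness_le : ‖(ContinuousLinearMap.snd ℝ ℝ ℝ).comp
    (ContinuousLinearMap.snd ℝ ℝ (ℝ × ℝ))‖ ≤ 1 :=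
  (ContinuousLinearMap.opNorm_comp_le _ _).trans (mul_le_one₀
    (ContinuousLinearMap.norm_snd_le ..) (norm_nonneg _) (ContinuousLinearMap.norm_snd_le ..))

theorem norm_iteratedFDeriv_comp_index_le {q : ℝ → ℝ} (n : ℕ) (hq : ContDiff ℝ n q)
    (p : ℝ × ℝ × ℝ) :
    ‖iteratedFDeriv ℝ n (fun p : ℝ × ℝ × ℝ => q p.2.1) p‖ ≤ |iteratedDeriv n q p.2.1| :=
  (norm_iteratedFDeriv_comp_clm_le hq ((ContinuousLinearMap.fst ℝ ℝ ℝ).comp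
    (ContinuousLinearMap.snd ℝ ℝ (ℝ × ℝ))) p).trans
    (mul_le_of_le_one_left (norm_nonneg _) (pow_le_one₀ (norm_nonneg _) norm_proj_index_le))

variable {R s : ℝ} {p : ℝ × ℝ × ℝ} (n : ℕ)

theorem exp_mul_le_one_add_exp_two_mul {a : ℝ} (ha : a ∈ Set.Ioo (0 : ℝ) 2) (s : ℝ) :
    Real.exp (s * a) ≤ 1 + Real.exp s ^ 2 := by
  rw [← Real.exp_nat_mul]
  push_cast
  rcases le_total 0 s with hs | hs
  · have : Real.exp (s * a) ≤ Real.exp (2 * s) := Real.exp_le_exp.2 (by nlinarith [ha.2])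
    linarith
  · have : Real.exp (s * a) ≤ 1 :=
      Real.exp_le_one_iff.2 (mul_nonpos_of_nonpos_of_nonneg hs ha.1.le)
    linarith [Real.exp_pos (2 * s)]

theorem norm_iteratedFDeriv_exp_index_le (hR : 0 ≤ R) (hp : p.2.1 ∈ Set.Ioo (0 : ℝ) 2) :
    ∀ i ≤ n, ‖iteratedFDeriv ℝ i (fun p : ℝ × ℝ × ℝ => -Real.exp (s * p.2.1)) p‖ ≤
      stableKernelGrowth n R s := by
  intro i hi
  have hexp := exp_mul_le_one_add_exp_two_mul hp s
  have hderiv : iteratedDeriv i (fun a => -Real.exp (s * a)) p.2.1 =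
      -(s ^ i * Real.exp (s * p.2.1)) := by
    rw [iteratedDeriv_fun_neg, iteratedDeriv_comp_const_mul Real.contDiff_exp,
      iteratedDeriv_eq_iterate, Real.iter_deriv_exp]
  refine (norm_iteratedFDeriv_comp_index_le (q := fun a => -Real.exp (s * a)) i (by fun_prop)
    p).trans ?_
  rw [hderiv, abs_neg, abs_mul, abs_pow, Real.abs_exp, stableKernelGrowth, mul_assoc]
  have hpow : |s| ^ i ≤ (1 + |s|) ^ (n + 1) := by
    calc |s| ^ i ≤ (1 + |s|) ^ i := by gcongr; linarith
      _ ≤ (1 + |s|) ^ (n + 1) := pow_le_pow_right₀ (by linarith [abs_nonneg s]) (by lia)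
  have hconst : 1 ≤ 2 ^ n * (1 + R) :=
    one_le_mul_of_one_le_of_one_le (one_le_pow₀ one_le_two) (by linarith)
  calc |s| ^ i * Real.exp (s * p.2.1) ≤ (1 + |s|) ^ (n + 1) * (1 + Real.exp s) ^ 2 := by
        gcongr
        nlinarith [Real.exp_pos s]
    _ ≤ 2 ^ n * (1 + R) * ((1 + |s|) ^ (n + 1) * (1 + Real.exp s) ^ 2) :=
        le_mul_of_one_le_left (by positivity) hconst

theorem norm_iteratedFDeriv_logPhase_le (hp : p.2.1 ∈ Set.Ioo (0 : ℝ) 2) :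
    ∀ i ≤ n, ‖iteratedFDeriv ℝ i
      (fun p : ℝ × ℝ × ℝ => s * Real.exp s * expAverage (s * p.2.1 - s)) p‖ ≤
      (1 + |s|) ^ (n + 1) * (Real.exp s + (1 + Real.exp s ^ 2)) := by
  intro i hi
  have hderiv : iteratedDeriv i (fun a => s * Real.exp s * expAverage (s * a - s)) p.2.1 =
      s * Real.exp s * (s ^ i * iteratedDeriv i expAverage (s * p.2.1 - s)) := by
    rw [iteratedDeriv_const_mul_field, iteratedDeriv_comp_const_mul
      (f := fun z => expAverage (z - s)) (contDiff_expAverage.comp (by fun_prop))]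
    simp only [iteratedDeriv_comp_sub_const]
  refine (norm_iteratedFDeriv_comp_index_le
    (q := fun a => s * Real.exp s * expAverage (s * a - s)) i
    (contDiff_const.mul (contDiff_expAverage.comp (by fun_prop))) p).trans ?_
  have hpow : |s| ^ (i + 1) ≤ (1 + |s|) ^ (n + 1) := by
    calc |s| ^ (i + 1) ≤ (1 + |s|) ^ (i + 1) := by gcongr; linarith
      _ ≤ (1 + |s|) ^ (n + 1) := pow_le_pow_right₀ (by linarith [abs_nonneg s]) (by lia)
  rw [hderiv]
  calc |s * Real.exp s * (s ^ i * iteratedDeriv i expAverage (s * p.2.1 - s))|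
      = |s| ^ (i + 1) * (Real.exp s * |iteratedDeriv i expAverage (s * p.2.1 - s)|) := by
        rw [abs_mul, abs_mul, abs_mul, abs_pow, Real.abs_exp]; ring
    _ ≤ (1 + |s|) ^ (n + 1) * (Real.exp s * (1 + Real.exp (s * p.2.1 - s))) := by
        gcongr
        exact abs_iteratedDeriv_expAverage_le _ _
    _ = (1 + |s|) ^ (n + 1) * (Real.exp s + Real.exp (s * p.2.1)) := by
        rw [mul_add, mul_one, ← Real.exp_add, add_sub_cancel]
    _ ≤ (1 + |s|) ^ (n + 1) * (Real.exp s + (1 + Real.exp s ^ 2)) := by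
        gcongr
        exact exp_mul_le_one_add_exp_two_mul hp s

theorem norm_iteratedFDeriv_stablePhase_le (hpR : ‖p‖ ≤ R) (hp : p.2.1 ∈ Set.Ioo (0 : ℝ) 2) :
    ∀ i ≤ n, ‖iteratedFDeriv ℝ i (stablePhase s) p‖ ≤ stableKernelGrowth n R s := by
  intro i hi
  have hR : 0 ≤ R := (norm_nonneg p).trans hpR
  have hlocation : ‖iteratedFDeriv ℝ i (fun p : ℝ × ℝ × ℝ => p.1 * Real.exp s) p‖ ≤
      Real.exp s * (1 + R) := by
    have hsmul : (fun p : ℝ × ℝ × ℝ => p.1 * Real.exp s) =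
        ⇑(Real.exp s • ContinuousLinearMap.fst ℝ ℝ (ℝ × ℝ)) := by
      ext q; exact mul_comm _ _
    rw [hsmul]
    refine (norm_iteratedFDeriv_clm_le i _ p).trans ?_
    rw [norm_smul, Real.norm_of_nonneg (Real.exp_pos s).le]
    gcongr
    exact mul_le_of_le_one_right (Real.exp_pos s).le (ContinuousLinearMap.norm_fst_le ..)
  have hskewness : ∀ j ≤ i, ‖iteratedFDeriv ℝ j (fun p : ℝ × ℝ × ℝ => p.2.2) p‖ ≤ 1 + R :=
    fun j _ => (norm_iteratedFDeriv_clm_le j ((ContinuousLinearMap.snd ℝ ℝ ℝ).comp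
      (ContinuousLinearMap.snd ℝ ℝ (ℝ × ℝ))) p).trans <|
        (mul_le_of_le_one_left (by positivity) norm_proj_skewness_le).trans (by gcongr)
  have hlogPhase : ContDiff ℝ i
      fun p : ℝ × ℝ × ℝ => s * Real.exp s * expAverage (s * p.2.1 - s) :=
    contDiff_const.mul (contDiff_expAverage.comp (by fun_prop))
  have hproduct := norm_iteratedFDeriv_mul_le_of_le (n := i) (by fun_prop) hlogPhase p hskewness
    fun j hj => norm_iteratedFDeriv_logPhase_le (s := s) n hp j (hj.trans hi)
  have hs : 1 ≤ (1 + |s|) ^ (n + 1) := one_le_pow₀ (by linarith [abs_nonneg s])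
  have hsum : stablePhase s = (fun p : ℝ × ℝ × ℝ => p.1 * Real.exp s) +
      fun p => p.2.2 * (s * Real.exp s * expAverage (s * p.2.1 - s)) := rfl
  rw [hsum, iteratedFDeriv_add_apply (by fun_prop) (contDiff_snd.snd.mul hlogPhase).contDiffAt]
  calc _ ≤ Real.exp s * (1 + R) + 2 ^ i * ((1 + R) *
        ((1 + |s|) ^ (n + 1) * (Real.exp s + (1 + Real.exp s ^ 2)))) :=
        (norm_add_le _ _).trans (add_le_add hlocation hproduct)
    _ ≤ 2 ^ n * (1 + |s|) ^ (n + 1) * (Real.exp s * (1 + R)) + 2 ^ n * ((1 + R) *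
        ((1 + |s|) ^ (n + 1) * (Real.exp s + (1 + Real.exp s ^ 2)))) := by
        refine add_le_add (le_mul_of_one_le_left (by positivity) ?_) ?_
        · exact one_le_mul_of_one_le_of_one_le (one_le_pow₀ one_le_two) hs
        · gcongr
          exact one_le_two
    _ = stableKernelGrowth n R s := by rw [stableKernelGrowth]; ring

theorem one_le_stableKernelGrowth (hR : 0 ≤ R) : 1 ≤ stableKernelGrowth n R s := by
  have hexp := Real.exp_pos s
  refine one_le_mul_of_one_le_of_one_le (one_le_mul_of_one_le_of_one_le
    (one_le_mul_of_one_le_of_one_le (one_le_pow₀ one_le_two) ?_) (one_le_pow₀ ?_))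
    (one_le_pow₀ ?_)
  all_goals linarith [abs_nonneg s]

theorem norm_iteratedFDeriv_stableKernel_le (hpR : ‖p‖ ≤ R) (hp : p.2.1 ∈ Set.Ioo (0 : ℝ) 2) :
    ∀ k ≤ n, ‖iteratedFDeriv ℝ k (stableKernel s) p‖ ≤ 2 ^ n * (n.factorial ^ 2 *
      stableKernelGrowth n R s ^ (2 * n)) * Real.exp (-Real.exp (s * p.2.1)) := by
  intro k hk
  have hR : 0 ≤ R := (norm_nonneg p).trans hpR
  set D := stableKernelGrowth n R s
  have hD : 1 ≤ D := one_le_stableKernelGrowth n hR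
  have hphase : ContDiff ℝ n (stablePhase s) :=
    contDiff_stablePhase.comp (contDiff_prodMk_right s)
  have hmodulus := norm_iteratedFDeriv_comp_le_of_le n (g := Real.exp)
    (f := fun p : ℝ × ℝ × ℝ => -Real.exp (s * p.2.1)) (by fun_prop) (by fun_prop) p
    (C := Real.exp (-Real.exp (s * p.2.1))) hD
    (fun i _ => by rw [iteratedDeriv_eq_iterate, Real.iter_deriv_exp, Real.abs_exp])
    (norm_iteratedFDeriv_exp_index_le n hR hp)
  have hcos := norm_iteratedFDeriv_comp_le_of_le n (g := Real.cos) (by fun_prop) hphase p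
    (C := 1) hD (fun i _ => Real.abs_iteratedDeriv_cos_le_one i _)
    (norm_iteratedFDeriv_stablePhase_le n hpR hp)
  refine (norm_iteratedFDeriv_mul_le_of_le (n := k) (by fun_prop)
    (Real.contDiff_cos.comp (hphase.of_le (by exact_mod_cast hk))) p
    (fun i hi => hmodulus i (hi.trans hk)) (fun i hi => hcos i (hi.trans hk))).trans ?_
  calc _ ≤ 2 ^ n * (n.factorial * Real.exp (-Real.exp (s * p.2.1)) * D ^ n *
        (n.factorial * 1 * D ^ n)) := by
        gcongr
        exact one_le_two
    _ = _ := by ring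

end StableKernel

section StableCosIntegral

theorem integrableOn_rpow_mul_one_add_pow_mul_exp_neg_rpow {a r : ℝ} (ha : 0 < a) (hr : -1 < r)
    (m : ℕ) :
    IntegrableOn (fun t : ℝ => t ^ r * (1 + t) ^ m * Real.exp (-t ^ a)) (Set.Ioi 0) := by
  induction m generalizing r with
  | zero => simpa using integrableOn_rpow_mul_exp_neg_rpow hr ha
  | succ m ih =>
    refine ((ih hr).add (ih (r := r + 1) (by linarith))).congr_fun (fun t ht => ?_)
      measurableSet_Ioi
    rw [Pi.add_apply, Real.rpow_add_one ht.ne']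
    ring

theorem one_add_abs_log_pow_le {t : ℝ} (ht : 0 < t) (m : ℕ) :
    (1 + |Real.log t|) ^ m ≤ (2 * m + 1) ^ m * (t ^ (-(1 / 2) : ℝ) * (1 + t)) := by
  have hexp : Real.exp (|Real.log t| / 2) ≤ t ^ (-(1 / 2) : ℝ) * (1 + t) := by
    have hsplit : t ^ (-(1 / 2) : ℝ) * (1 + t) = t ^ (-(1 / 2) : ℝ) + t ^ (1 / 2 : ℝ) := by
      rw [mul_add, mul_one, ← Real.rpow_add_one ht.ne']
      norm_num
    rw [hsplit, Real.rpow_def_of_pos ht, Real.rpow_def_of_pos ht]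
    have hpos := Real.exp_pos (Real.log t * (1 / 2))
    have hneg := Real.exp_pos (Real.log t * -(1 / 2))
    rcases abs_cases (Real.log t) with ⟨h, -⟩ | ⟨h, -⟩ <;> rw [h]
    · rw [div_eq_mul_one_div]; linarith
    · rw [show -Real.log t / 2 = Real.log t * -(1 / 2) by ring]; linarith
  rcases m.eq_zero_or_pos with rfl | hm
  · simpa using (Real.one_le_exp (by positivity)).trans hexp
  have hm' : (0 : ℝ) < m := by exact_mod_cast hm
  set u := |Real.log t| / (2 * m) with hu
  have hu0 : 0 ≤ u := by positivity
  have hlog : |Real.log t| = 2 * m * u := by rw [hu]; field_simp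
  calc (1 + |Real.log t|) ^ m ≤ ((2 * m + 1) * Real.exp u) ^ m := by
        have := Real.add_one_le_exp u
        gcongr
        rw [hlog]
        nlinarith
    _ = (2 * m + 1) ^ m * Real.exp (|Real.log t| / 2) := by
        rw [mul_pow, ← Real.exp_nat_mul, hlog]; congr 2; ring
    _ ≤ _ := by gcongr

theorem integrableOn_stableKernelGrowth_pow_mul_exp_neg_rpow {a R : ℝ} (ha : 0 < a) (hR : 0 ≤ R)
    (n m : ℕ) :
    IntegrableOn (fun t => stableKernelGrowth n R (Real.log t) ^ m * Real.exp (-t ^ a))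
      (Set.Ioi 0) := by
  set N := (n + 1) * m
  refine ((integrableOn_rpow_mul_one_add_pow_mul_exp_neg_rpow (r := -(1 / 2)) ha (by norm_num)
    (2 * m + 1)).const_mul ((2 ^ n * (1 + R)) ^ m * (2 * N + 1) ^ N)).mono' ?_ ?_
  · unfold stableKernelGrowth
    exact Measurable.aestronglyMeasurable (by fun_prop)
  refine (ae_restrict_iff' measurableSet_Ioi).2 (.of_forall fun t (ht : 0 < t) => ?_)
  have hgrowth : stableKernelGrowth n R (Real.log t) ^ m =
      (2 ^ n * (1 + R)) ^ m * (1 + |Real.log t|) ^ N * (1 + t) ^ (2 * m) := by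
    rw [stableKernelGrowth, Real.exp_log ht, mul_pow, mul_pow, ← pow_mul, ← pow_mul]
  have hlog := one_add_abs_log_pow_le ht N
  rw [hgrowth, Real.norm_of_nonneg (by positivity)]
  calc _ ≤ (2 ^ n * (1 + R)) ^ m * ((2 * N + 1) ^ N * (t ^ (-(1 / 2) : ℝ) * (1 + t))) *
        (1 + t) ^ (2 * m) * Real.exp (-t ^ a) := by gcongr
    _ = _ := by ring

/-- Half of the real part of the stable Fourier integral, as a function of the location, the index
and the regularised skewness. -/
noncomputable def stableCosIntegral (p : ℝ × ℝ × ℝ) : ℝ :=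
  ∫ t in Set.Ioi (0 : ℝ), stableKernel (Real.log t) p

theorem stableCosIntegral_eq_integral_map (p : ℝ × ℝ × ℝ) :
    stableCosIntegral p =
      ∫ s, stableKernel s p ∂(volume.restrict (Set.Ioi (0 : ℝ))).map Real.log :=
  (integral_map Real.measurable_log.aemeasurable
    (contDiff_stableKernel (n := 0).continuous.comp (.prodMk_left p)).aestronglyMeasurable).symm

theorem exp_neg_exp_mul_le {a b : ℝ} (ha : 0 ≤ a) (hab : a ≤ b) (s : ℝ) :
    Real.exp (-Real.exp (s * b)) ≤ Real.exp 1 * Real.exp (-Real.exp (s * a)) := by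
  rw [← Real.exp_add, Real.exp_le_exp]
  rcases le_total 0 s with hs | hs
  · have : Real.exp (s * a) ≤ Real.exp (s * b) := by gcongr
    linarith
  · have : Real.exp (s * a) ≤ 1 := Real.exp_le_one_iff.2 (mul_nonpos_of_nonpos_of_nonneg hs ha)
    linarith [Real.exp_pos (s * b)]

theorem contDiffOn_stableCosIntegral (n : ℕ) :
    ContDiffOn ℝ n stableCosIntegral {p | p.2.1 ∈ Set.Ioo 0 2} := by
  rw [funext stableCosIntegral_eq_integral_map]
  refine contDiffOn_integral_of_dominated n (isOpen_Ioo.preimage (by fun_prop))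
    contDiff_stableKernel fun p₀ hp₀ => ?_
  set a := p₀.2.1 / 2
  set R := ‖p₀‖ + 1
  have ha : 0 < a := half_pos hp₀.1
  set C : ℝ := 2 ^ n * n.factorial ^ 2 * Real.exp 1
  have hnear : {p : ℝ × ℝ × ℝ | ‖p‖ < R ∧ p.2.1 ∈ Set.Ioo a 2} ∈ 𝓝 p₀ :=
    (continuous_norm.isOpen_preimage _ isOpen_Iio |>.inter
      (isOpen_Ioo.preimage (by fun_prop : Continuous fun p : ℝ × ℝ × ℝ => p.2.1))).mem_nhds
      ⟨lt_add_one ‖p₀‖, half_lt_self hp₀.1, hp₀.2⟩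
  refine ⟨_, hnear, fun s => C * (stableKernelGrowth n R s ^ (2 * n) *
    Real.exp (-Real.exp (s * a))), ?_, .of_forall fun s p hp k hk => ?_⟩
  · refine Integrable.const_mul ((integrable_map_measure ?_
      Real.measurable_log.aemeasurable).2 ?_) C
    · unfold stableKernelGrowth
      exact Continuous.aestronglyMeasurable (by fun_prop)
    · refine (integrableOn_stableKernelGrowth_pow_mul_exp_neg_rpow ha (by positivity : 0 ≤ R) n
        (2 * n)).congr_fun (fun t ht => ?_) measurableSet_Ioi
      simp only [Function.comp_apply, Real.rpow_def_of_pos ht]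
  · calc _ ≤ 2 ^ n * (n.factorial ^ 2 * stableKernelGrowth n R s ^ (2 * n)) *
          Real.exp (-Real.exp (s * p.2.1)) :=
          norm_iteratedFDeriv_stableKernel_le n hp.1.le ⟨ha.trans hp.2.1, hp.2.2⟩ k hk
      _ ≤ 2 ^ n * (n.factorial ^ 2 * stableKernelGrowth n R s ^ (2 * n)) *
          (Real.exp 1 * Real.exp (-Real.exp (s * a))) := by
          have := one_le_stableKernelGrowth (s := s) n (by positivity : 0 ≤ R)
          gcongr
          exact exp_neg_exp_mul_le ha.le hp.2.1.le s
      _ = _ := by simp only [C]; ring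

end StableCosIntegral

section Skewness

theorem contDiff_sinc {n : WithTop ℕ∞} : ContDiff ℝ n Real.sinc := by
  have hdiff : Differentiable ℂ (dslope Complex.sin 0) := by
    rw [← differentiableOn_univ, Complex.differentiableOn_dslope univ_mem]
    exact Complex.differentiable_sin.differentiableOn
  have hsinc : Real.sinc = fun x : ℝ => (dslope Complex.sin 0 x).re := by
    funext x
    rcases eq_or_ne x 0 with rfl | hx
    · simp
    · rw [Real.sinc_of_ne_zero hx, dslope_of_ne _ (Complex.ofReal_ne_zero.2 hx), slope_def_field,
        Complex.sin_zero, sub_zero, sub_zero, ← Complex.ofReal_sin, ← Complex.ofReal_div,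
        Complex.ofReal_re]
  rw [hsinc]
  exact hdiff.contDiff.real_of_complex

theorem sinc_pos {x : ℝ} (hx : |x| < Real.pi) : 0 < Real.sinc x := by
  wlog hx0 : 0 ≤ x generalizing x
  · rw [← Real.sinc_neg]
    exact this (by rwa [abs_neg]) (by linarith)
  rcases hx0.eq_or_lt with rfl | hx0
  · simp
  · rw [Real.sinc_of_ne_zero hx0.ne']
    exact div_pos (Real.sin_pos_of_pos_of_lt_pi hx0 ((le_abs_self x).trans_lt hx)) hx0

/-- The smooth extension to `a = 1` of `(1 - a) * tan (π a / 2)`. -/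
noncomputable def skewCoeff (a : ℝ) : ℝ :=
  Real.cos (Real.pi / 2 * (1 - a)) / (Real.pi / 2 * Real.sinc (Real.pi / 2 * (1 - a)))

theorem sinc_pi_div_two_mul_one_sub_pos {a : ℝ} (ha : a ∈ Set.Ioo (0 : ℝ) 2) :
    0 < Real.sinc (Real.pi / 2 * (1 - a)) := by
  refine sinc_pos ?_
  have hπ := Real.pi_pos
  rw [abs_mul, abs_of_pos (by positivity)]
  have : |1 - a| < 1 := abs_lt.2 ⟨by linarith [ha.2], by linarith [ha.1]⟩
  nlinarith

theorem contDiffOn_skewCoeff {n : WithTop ℕ∞} : ContDiffOn ℝ n skewCoeff (Set.Ioo 0 2) := by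
  have := contDiff_sinc (n := n)
  refine ContDiffOn.div (by fun_prop) (by fun_prop) fun a ha => ?_
  exact mul_ne_zero (by positivity) (sinc_pi_div_two_mul_one_sub_pos ha).ne'

theorem skewCoeff_one : skewCoeff 1 = 2 / Real.pi := by
  simp [skewCoeff]

theorem skewCoeff_of_ne_one {a : ℝ} (ha : a ≠ 1) :
    skewCoeff a = (1 - a) * Real.tan (Real.pi * a / 2) := by
  have h1 : 1 - a ≠ 0 := sub_ne_zero.2 ha.symm
  have hcompl : Real.pi * a / 2 = Real.pi / 2 - Real.pi / 2 * (1 - a) := by ring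
  rw [skewCoeff, Real.sinc_of_ne_zero (mul_ne_zero (by positivity) h1), hcompl,
    Real.tan_eq_sin_div_cos, Real.sin_pi_div_two_sub, Real.cos_pi_div_two_sub]
  field_simp

/-- The imaginary part of minus the cumulant of the standard `M₀` stable law with `β = 1` at a
frequency `u ≥ 0`. -/
noncomputable def skewPhase (a u : ℝ) : ℝ :=
  if a = 1 then 2 / Real.pi * u * Real.log u else Real.tan (Real.pi * a / 2) * (u - u ^ a)

theorem skewPhase_one (u : ℝ) : skewPhase 1 u = 2 / Real.pi * u * Real.log u := if_pos rfl

theorem skewPhase_of_ne_one {a : ℝ} (ha : a ≠ 1) (u : ℝ) :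
    skewPhase a u = Real.tan (Real.pi * a / 2) * (u - u ^ a) := if_neg ha

theorem skewPhase_zero {a : ℝ} (ha : a ≠ 0) : skewPhase a 0 = 0 := by
  unfold skewPhase; split_ifs <;> simp [Real.zero_rpow ha]

theorem skewPhase_eq_skewCoeff_mul {a t : ℝ} (ht : 0 < t) :
    skewPhase a t = skewCoeff a *
      (Real.log t * Real.exp (Real.log t) * expAverage (Real.log t * a - Real.log t)) := by
  rcases eq_or_ne a 1 with rfl | ha
  · rw [skewPhase_one, skewCoeff_one, mul_one, sub_self, expAverage_zero, Real.exp_log ht]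
    ring
  have hmean : (a - 1) * (Real.log t * Real.exp (Real.log t) *
      expAverage (Real.log t * a - Real.log t)) = t ^ a - t := by
    calc _ = Real.exp (Real.log t) * ((Real.log t * a - Real.log t) *
          expAverage (Real.log t * a - Real.log t)) := by ring
      _ = Real.exp (Real.log t) * (Real.exp (Real.log t * a - Real.log t) - 1) := by
          rw [mul_expAverage]
      _ = t ^ a - t := by
          rw [mul_sub, ← Real.exp_add, add_sub_cancel, mul_one, Real.exp_log ht,
            Real.rpow_def_of_pos ht]
  rw [skewPhase_of_ne_one ha, skewCoeff_of_ne_one ha]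
  linear_combination Real.tan (Real.pi * a / 2) * hmean

/-- The cumulant of the stable law with index `a`, skewness `b`, location `0` and scale `1` in the
`M₀` parameterization. -/
noncomputable def stableExponent (a b t : ℝ) : ℂ :=
  ((-(|t| ^ a) : ℝ) : ℂ) - Complex.I * ((b * Real.sign t * skewPhase a |t| : ℝ) : ℂ)

theorem stableExponent_re (a b t : ℝ) : (stableExponent a b t).re = -|t| ^ a := by
  simp [stableExponent]

theorem norm_exp_stableExponent (a b t : ℝ) :
    ‖Complex.exp (stableExponent a b t)‖ = Real.exp (-|t| ^ a) := by
  rw [Complex.norm_exp, stableExponent_re]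

theorem real_sign_mul_of_pos {c : ℝ} (hc : 0 < c) (t : ℝ) : Real.sign (c * t) = Real.sign t := by
  rcases lt_trichotomy t 0 with h | rfl | h
  · rw [Real.sign_of_neg h, Real.sign_of_neg (mul_neg_of_pos_of_neg hc h)]
  · rw [mul_zero]
  · rw [Real.sign_of_pos h, Real.sign_of_pos (mul_pos hc h)]

theorem real_sign_mul_abs (t : ℝ) : Real.sign t * |t| = t := by
  rcases lt_trichotomy t 0 with h | rfl | h
  · rw [Real.sign_of_neg h, abs_of_neg h]; ring
  · simp
  · rw [Real.sign_of_pos h, abs_of_pos h]; ring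

theorem psiM_eq_stableExponent_add {θ : Fin 4 → ℝ} (hσ : 0 < θ 1) (t : ℝ) :
    psiM θ t =
      stableExponent (θ 2) (θ 3) (θ 1 * t) + Complex.I * ((θ 0 * t : ℝ) : ℂ) := by
  rw [psiM, stableExponent]
  split_ifs with h
  · rw [h, skewPhase_one, Real.rpow_one]
    congr 4
    linear_combination (-2 * θ 3 / Real.pi * Real.log |θ 1 * t|) * real_sign_mul_abs (θ 1 * t)
  rw [skewPhase_of_ne_one h, real_sign_mul_of_pos hσ]
  rcases eq_or_ne t 0 with rfl | ht
  · simp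
  have hpos : 0 < |θ 1 * t| := abs_pos.2 (mul_ne_zero hσ.ne' ht)
  have hfactor : |θ 1 * t| - |θ 1 * t| ^ θ 2 =
      |θ 1 * t| ^ θ 2 * (|θ 1 * t| ^ (1 - θ 2) - 1) := by
    rw [mul_sub_one, ← Real.rpow_add hpos, add_sub_cancel, Real.rpow_one]
  rw [hfactor]
  push_cast
  ring

theorem measurable_real_sign : Measurable Real.sign :=
  Measurable.ite measurableSet_Iio measurable_const
    (Measurable.ite measurableSet_Ioi measurable_const measurable_const)

theorem measurable_skewPhase (a : ℝ) : Measurable (skewPhase a) := by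
  unfold skewPhase
  split_ifs <;> fun_prop

theorem measurable_stableExponent (a b : ℝ) : Measurable (stableExponent a b) := by
  have := measurable_real_sign
  have := measurable_skewPhase a
  unfold stableExponent
  fun_prop

theorem integrable_exp_neg_abs_rpow {a : ℝ} (ha : 0 < a) :
    Integrable fun t : ℝ => Real.exp (-|t| ^ a) := by
  by_contra hnot
  have hint := integral_comp_abs (f := fun t => Real.exp (-t ^ a))
  rw [integral_undef hnot, integral_exp_neg_rpow ha] at hint
  linarith [Real.Gamma_pos_of_pos (s := 1 / a + 1) (by positivity)]

theorem integrable_exp_stableExponent {a : ℝ} (ha : 0 < a) (b : ℝ) :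
    Integrable fun t => Complex.exp (stableExponent a b t) :=
  (integrable_exp_neg_abs_rpow ha).mono' (measurable_stableExponent a b).cexp.aestronglyMeasurable
    (.of_forall fun t => (norm_exp_stableExponent a b t).le)

end Skewness

section Density

open scoped FourierTransform

theorem fM_eq_fourier {θ : Fin 4 → ℝ} (hσ : 0 < θ 1) (x : ℝ) :
    fM θ x = (2 * Real.pi * θ 1)⁻¹ *
      (𝓕 (fun u => Complex.exp (stableExponent (θ 2) (θ 3) u))
        ((x - θ 0) / (2 * Real.pi * θ 1))).re := by
  set w := (x - θ 0) / (2 * Real.pi * θ 1) with hw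
  set ψ : ℝ → ℂ := fun u => Complex.exp (stableExponent (θ 2) (θ 3) u)
  have hx : x = θ 0 + 2 * Real.pi * θ 1 * w := by rw [hw]; field_simp; ring
  have hscale : ∀ t : ℝ, Complex.exp (-Complex.I * (t : ℂ) * (x : ℂ)) * phiM θ t =
      (fun u : ℝ => Complex.exp (((-2 * Real.pi * u * w : ℝ) : ℂ) * Complex.I) • ψ u)
        (θ 1 * t) := by
    intro t
    simp only [ψ, phiM, smul_eq_mul]
    rw [psiM_eq_stableExponent_add hσ, ← Complex.exp_add, ← Complex.exp_add, hx]
    congr 1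
    push_cast
    ring
  rw [fM, integral_congr_ae (.of_forall hscale), Measure.integral_comp_mul_left
    (fun u : ℝ => Complex.exp (((-2 * Real.pi * u * w : ℝ) : ℂ) * Complex.I) • ψ u),
    ← Real.fourier_real_eq_integral_exp_smul, abs_of_pos (inv_pos.2 hσ), Complex.smul_re,
    smul_eq_mul]
  field_simp

theorem re_exp_mul_exp_stableExponent {a : ℝ} (ha : a ≠ 0) (b y u : ℝ) :
    (Complex.exp (((-(u * y) : ℝ) : ℂ) * Complex.I) * Complex.exp (stableExponent a b u)).re =
      Real.exp (-|u| ^ a) * Real.cos (|u| * y + b * skewPhase a |u|) := by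
  have hsum : ((-(u * y) : ℝ) : ℂ) * Complex.I + stableExponent a b u =
      ((-|u| ^ a : ℝ) : ℂ) +
        ((-(u * y + b * Real.sign u * skewPhase a |u|) : ℝ) : ℂ) * Complex.I := by
    rw [stableExponent]; push_cast; ring
  rw [← Complex.exp_add, hsum, Complex.exp_add, ← Complex.ofReal_exp, Complex.re_ofReal_mul,
    Complex.exp_ofReal_mul_I_re, Real.cos_neg]
  rcases lt_trichotomy u 0 with hu | rfl | hu
  · rw [Real.sign_of_neg hu, abs_of_neg hu, ← Real.cos_neg]
    ring_nf
  · simp [skewPhase_zero ha]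
  · rw [Real.sign_of_pos hu, abs_of_pos hu, mul_one]

theorem stableKernel_log {t : ℝ} (ht : 0 < t) (a b y : ℝ) :
    stableKernel (Real.log t) (y, a, b * skewCoeff a) =
      Real.exp (-t ^ a) * Real.cos (t * y + b * skewPhase a t) := by
  rw [stableKernel, stablePhase, skewPhase_eq_skewCoeff_mul ht, Real.rpow_def_of_pos ht,
    Real.exp_log ht]
  ring_nf

theorem re_fourier_exp_stableExponent {a : ℝ} (ha : 0 < a) (b w : ℝ) :
    (𝓕 (fun u => Complex.exp (stableExponent a b u)) w).re =
      2 * stableCosIntegral (2 * Real.pi * w, a, b * skewCoeff a) := by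
  set y := 2 * Real.pi * w with hy
  have hint : Integrable fun u : ℝ =>
      Complex.exp (((-(u * y) : ℝ) : ℂ) * Complex.I) * Complex.exp (stableExponent a b u) := by
    refine (integrable_exp_stableExponent ha b).bdd_mul (c := 1)
      (Continuous.aestronglyMeasurable (by fun_prop)) (.of_forall fun u => ?_)
    rw [Complex.norm_exp_ofReal_mul_I]
  calc (𝓕 (fun u => Complex.exp (stableExponent a b u)) w).re
      = ∫ u : ℝ, (Complex.exp (((-(u * y) : ℝ) : ℂ) * Complex.I) *
          Complex.exp (stableExponent a b u)).re := by
        rw [Real.fourier_real_eq_integral_exp_smul]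
        refine Eq.trans ?_ (integral_re (𝕜 := ℂ) hint).symm
        simp only [smul_eq_mul, hy]
        congr! 6
        ring_nf
    _ = ∫ u : ℝ, Real.exp (-|u| ^ a) * Real.cos (|u| * y + b * skewPhase a |u|) := by
        simp only [re_exp_mul_exp_stableExponent ha.ne']
    _ = 2 * ∫ t in Set.Ioi (0 : ℝ), Real.exp (-t ^ a) * Real.cos (t * y + b * skewPhase a t) :=
        integral_comp_abs (f := fun t => Real.exp (-t ^ a) * Real.cos (t * y + b * skewPhase a t))
    _ = 2 * stableCosIntegral (y, a, b * skewCoeff a) := by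
        rw [stableCosIntegral, setIntegral_congr_fun measurableSet_Ioi fun t ht =>
          (stableKernel_log ht a b y).symm]

theorem isOpen_setOf_snd_mem_thetaInt : IsOpen {p : ℝ × (Fin 4 → ℝ) | p.2 ∈ ThetaInt} :=
  ((isOpen_Ioi.preimage (by fun_prop : Continuous fun p : ℝ × (Fin 4 → ℝ) => p.2 1)).inter
    ((isOpen_Ioo.preimage (by fun_prop : Continuous fun p : ℝ × (Fin 4 → ℝ) => p.2 2)).inter
      (isOpen_Ioo.preimage (by fun_prop : Continuous fun p : ℝ × (Fin 4 → ℝ) => p.2 3))))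

theorem contDiffOn_fM (n : ℕ) : ContDiffOn ℝ n (fun p : ℝ × (Fin 4 → ℝ) => fM p.2 p.1)
    {p | p.2 ∈ ThetaInt} := by
  have hσ : ∀ p ∈ {p : ℝ × (Fin 4 → ℝ) | p.2 ∈ ThetaInt}, 2 * Real.pi * p.2 1 ≠ 0 :=
    fun p hp => (mul_pos Real.two_pi_pos hp.1).ne'
  have hcoord : ContDiffOn ℝ n (fun p : ℝ × (Fin 4 → ℝ) =>
      (2 * Real.pi * ((p.1 - p.2 0) / (2 * Real.pi * p.2 1)), p.2 2, p.2 3 * skewCoeff (p.2 2)))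
      {p | p.2 ∈ ThetaInt} :=
    (contDiffOn_const.mul (ContDiffOn.div (by fun_prop) (by fun_prop) hσ)).prodMk
      (ContDiffOn.prodMk (by fun_prop) (ContDiffOn.mul (by fun_prop)
        (contDiffOn_skewCoeff.comp (by fun_prop) fun p hp => hp.2.1)))
  have hinv : ContDiffOn ℝ n (fun p : ℝ × (Fin 4 → ℝ) => (2 * Real.pi * p.2 1)⁻¹)
      {p | p.2 ∈ ThetaInt} := ContDiffOn.inv (by fun_prop) hσ
  refine (hinv.mul ((contDiffOn_const (c := (2 : ℝ))).mul
    ((contDiffOn_stableCosIntegral n).comp hcoord fun p hp => hp.2.1))).congr fun p hp => ?_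
  rw [fM_eq_fourier hp.1, re_fourier_exp_stableExponent hp.2.1.1]
  rfl

end Density

section CauchyMellin

theorem sin_pi_mul_div_two_pos {q : ℝ} (hq : q ∈ Set.Ioo (0 : ℝ) 2) :
    0 < Real.sin (Real.pi * q / 2) := by
  have hπ := Real.pi_pos
  exact Real.sin_pos_of_pos_of_lt_pi (by nlinarith [hq.1]) (by nlinarith [hq.2])

/-- The Mellin transform of `r ↦ 1 / (r ^ 2 + 1)` at `q`, for `0 < q < 2`. -/
noncomputable def cauchyMellin (q : ℝ) : ℝ := Real.pi / (2 * Real.sin (Real.pi * q / 2))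

theorem cauchyMellin_pos {q : ℝ} (hq : q ∈ Set.Ioo (0 : ℝ) 2) : 0 < cauchyMellin q :=
  div_pos Real.pi_pos (mul_pos two_pos (sin_pi_mul_div_two_pos hq))

theorem integral_rpow_mul_exp_neg_sq_add_sq_mul {q v : ℝ} (hq : 0 < q) (hv : 0 < v) (u : ℝ) :
    ∫ r in Set.Ioi (0 : ℝ), r ^ (q - 1) * Real.exp (-((r ^ 2 + u ^ 2) * v)) =
      Real.Gamma (q / 2) / 2 * (v ^ ((1 - q / 2) - 1) * Real.exp (-(u ^ 2 * v))) := by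
  have hsplit : ∀ r : ℝ, r ^ (q - 1) * Real.exp (-((r ^ 2 + u ^ 2) * v)) =
      Real.exp (-(u ^ 2 * v)) * (r ^ (q - 1) * Real.exp (-v * r ^ (2 : ℝ))) := fun r => by
    rw [Real.rpow_two, mul_left_comm, ← Real.exp_add]
    ring_nf
  simp only [hsplit]
  rw [integral_const_mul, integral_rpow_mul_exp_neg_mul_rpow two_pos (by linarith) hv,
    sub_add_cancel, neg_div, sub_sub_cancel_left]
  ring

theorem integrableOn_rpow_mul_exp_neg_sq_add_sq_mul {q v : ℝ} (hq : 0 < q) (hv : 0 < v) (u : ℝ) :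
    IntegrableOn (fun r : ℝ => r ^ (q - 1) * Real.exp (-((r ^ 2 + u ^ 2) * v))) (Set.Ioi 0) := by
  by_contra hnot
  have hint := integral_rpow_mul_exp_neg_sq_add_sq_mul hq hv u
  rw [integral_undef hnot] at hint
  have := Real.Gamma_pos_of_pos (half_pos hq)
  exact hint.not_lt (by positivity)

theorem ofReal_setIntegral_eq_setLIntegral_ofReal {f : ℝ → ℝ} {s : Set ℝ} (hs : MeasurableSet s)
    (hf : IntegrableOn f s) (hf0 : ∀ x ∈ s, 0 ≤ f x) :
    ENNReal.ofReal (∫ x in s, f x) = ∫⁻ x in s, ENNReal.ofReal (f x) :=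
  ofReal_integral_eq_lintegral_ofReal hf ((ae_restrict_iff' hs).2 (.of_forall hf0))

theorem integral_rpow_mul_exp_neg_sq_mul {q u : ℝ} (hq : q ∈ Set.Ioo (0 : ℝ) 2) (hu : 0 < u) :
    ∫ v in Set.Ioi (0 : ℝ),
        Real.Gamma (q / 2) / 2 * (v ^ ((1 - q / 2) - 1) * Real.exp (-(u ^ 2 * v))) =
      u ^ (q - 2) * cauchyMellin q := by
  rw [integral_const_mul, Real.integral_rpow_mul_exp_neg_mul_Ioi (by linarith [hq.2])
    (sq_pos_of_pos hu), mul_left_comm, div_mul_eq_mul_div, Real.Gamma_mul_Gamma_one_sub,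
    one_div, Real.inv_rpow (sq_nonneg u), ← Real.rpow_neg (sq_nonneg u), ← Real.rpow_natCast_mul
    hu.le]
  rw [cauchyMellin]
  push_cast
  ring_nf

theorem lintegral_rpow_div_sq_add_sq {q u : ℝ} (hq : q ∈ Set.Ioo (0 : ℝ) 2) (hu : 0 < u) :
    ∫⁻ r in Set.Ioi (0 : ℝ), ENNReal.ofReal (r ^ (q - 1) / (r ^ 2 + u ^ 2)) =
      ENNReal.ofReal (u ^ (q - 2) * cauchyMellin q) := by
  have hΓ := Real.Gamma_pos_of_pos (half_pos hq.1)
  calc ∫⁻ r in Set.Ioi (0 : ℝ), ENNReal.ofReal (r ^ (q - 1) / (r ^ 2 + u ^ 2))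
      = ∫⁻ r in Set.Ioi (0 : ℝ), ∫⁻ v in Set.Ioi (0 : ℝ),
          ENNReal.ofReal (r ^ (q - 1) * Real.exp (-((r ^ 2 + u ^ 2) * v))) := by
        refine setLIntegral_congr_fun measurableSet_Ioi fun r (hr : 0 < r) => ?_
        have hneg : -(r ^ 2 + u ^ 2) < 0 := by nlinarith
        simp only [← neg_mul]
        rw [← ofReal_setIntegral_eq_setLIntegral_ofReal measurableSet_Ioi
          ((integrableOn_exp_mul_Ioi hneg 0).const_mul _) fun v _ => by positivity,
          integral_const_mul, integral_exp_mul_Ioi hneg, mul_zero, Real.exp_zero,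
          neg_div_neg_eq, mul_one_div]
    _ = ∫⁻ v in Set.Ioi (0 : ℝ), ∫⁻ r in Set.Ioi (0 : ℝ),
          ENNReal.ofReal (r ^ (q - 1) * Real.exp (-((r ^ 2 + u ^ 2) * v))) :=
        lintegral_lintegral_swap (Measurable.aemeasurable (by unfold Function.uncurry; fun_prop))
    _ = ∫⁻ v in Set.Ioi (0 : ℝ), ENNReal.ofReal
          (Real.Gamma (q / 2) / 2 * (v ^ ((1 - q / 2) - 1) * Real.exp (-(u ^ 2 * v)))) := by
        refine setLIntegral_congr_fun measurableSet_Ioi fun v hv => ?_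
        rw [← integral_rpow_mul_exp_neg_sq_add_sq_mul hq.1 hv,
          ofReal_setIntegral_eq_setLIntegral_ofReal measurableSet_Ioi
            (integrableOn_rpow_mul_exp_neg_sq_add_sq_mul hq.1 hv u)
            fun r (hr : 0 < r) => by positivity]
    _ = _ := by
        have hpos := cauchyMellin_pos hq
        rw [← integral_rpow_mul_exp_neg_sq_mul hq hu,
          ofReal_setIntegral_eq_setLIntegral_ofReal measurableSet_Ioi (of_not_not fun hnot => ?_)
            fun v (hv : 0 < v) => by positivity]
        have hval := integral_rpow_mul_exp_neg_sq_mul hq hu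
        rw [integral_undef hnot] at hval
        exact hval.not_lt (by positivity)

theorem integrableOn_rpow_div_sq_add_sq {q u : ℝ} (hq : q ∈ Set.Ioo (0 : ℝ) 2) (hu : 0 < u) :
    IntegrableOn (fun r : ℝ => r ^ (q - 1) / (r ^ 2 + u ^ 2)) (Set.Ioi 0) := by
  refine ⟨Measurable.aestronglyMeasurable (by fun_prop), ?_⟩
  rw [hasFiniteIntegral_iff_ofReal, lintegral_rpow_div_sq_add_sq hq hu]
  · exact ENNReal.ofReal_lt_top
  · refine (ae_restrict_iff' measurableSet_Ioi).2 (.of_forall fun r (hr : 0 < r) => ?_)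
    simp only [Pi.zero_apply]
    positivity

theorem integral_rpow_div_sq_add_sq {q u : ℝ} (hq : q ∈ Set.Ioo (0 : ℝ) 2) (hu : 0 < u) :
    ∫ r in Set.Ioi (0 : ℝ), r ^ (q - 1) / (r ^ 2 + u ^ 2) =
      u ^ (q - 2) * cauchyMellin q := by
  have hpos := cauchyMellin_pos hq
  have hnonneg : ∀ r ∈ Set.Ioi (0 : ℝ), 0 ≤ r ^ (q - 1) / (r ^ 2 + u ^ 2) :=
    fun r (hr : 0 < r) => by positivity
  rw [← ENNReal.ofReal_eq_ofReal_iff (setIntegral_nonneg measurableSet_Ioi hnonneg)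
    (by positivity), ofReal_setIntegral_eq_setLIntegral_ofReal measurableSet_Ioi
    (integrableOn_rpow_div_sq_add_sq hq hu) hnonneg, lintegral_rpow_div_sq_add_sq hq hu]

end CauchyMellin

section ExponentialMixture

/-- Minus the real part of the contribution of rate `r` to the stable exponent: up to the weight
`r ^ (a - 1)`, it is `∫ (1 - cos (t x)) * r * exp (-r x)` over `x > 0`. -/
noncomputable def mixtureRe (a t r : ℝ) : ℝ := r ^ (a - 1) * (t ^ 2 / (r ^ 2 + t ^ 2))

/-- The imaginary part of the contribution of rate `r` to the stable exponent: up to the weight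
`r ^ (a - 1)`, it is `∫ sin (t x) * r * exp (-r x)` over `x > 0`, compensated by a drift which makes
it vanish at `t = 1`. -/
noncomputable def mixtureIm (a t r : ℝ) : ℝ :=
  r ^ (a - 1) * (r * t / (r ^ 2 + t ^ 2) - r * t / (r ^ 2 + 1))

theorem integrableOn_mixtureRe {a : ℝ} (ha : a ∈ Set.Ioo (0 : ℝ) 2) (t : ℝ) :
    IntegrableOn (mixtureRe a t) (Set.Ioi 0) := by
  rcases eq_or_ne t 0 with rfl | ht
  · have hzero : mixtureRe a 0 = 0 := funext fun r => by simp [mixtureRe]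
    exact hzero ▸ integrableOn_zero
  refine ((integrableOn_rpow_div_sq_add_sq ha (abs_pos.2 ht)).const_mul (t ^ 2)).congr
    (.of_forall fun r => ?_)
  simp only [mixtureRe, sq_abs]
  ring

theorem integral_mixtureRe {a : ℝ} (ha : a ∈ Set.Ioo (0 : ℝ) 2) (t : ℝ) :
    ∫ r in Set.Ioi (0 : ℝ), mixtureRe a t r = cauchyMellin a * |t| ^ a := by
  rcases eq_or_ne t 0 with rfl | ht
  · simp [mixtureRe, Real.zero_rpow ha.1.ne']
  have ht' := abs_pos.2 ht
  calc ∫ r in Set.Ioi (0 : ℝ), mixtureRe a t r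
      = ∫ r in Set.Ioi (0 : ℝ), |t| ^ 2 * (r ^ (a - 1) / (r ^ 2 + |t| ^ 2)) := by
        congr 1 with r
        simp only [mixtureRe, sq_abs]
        ring
    _ = cauchyMellin a * |t| ^ a := by
        rw [integral_const_mul, integral_rpow_div_sq_add_sq ha ht', ← Real.rpow_natCast,
          ← mul_assoc, ← Real.rpow_add ht', mul_comm]
        norm_num

theorem mixtureIm_eq_mul {r t : ℝ} (hr : 0 < r) (a : ℝ) :
    mixtureIm a t r =
      (1 - t ^ 2) * (r * t / (r ^ 2 + t ^ 2) * (r ^ (a - 1) / (r ^ 2 + 1 ^ 2))) := by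
  rw [mixtureIm]
  field_simp
  ring

theorem integrableOn_mixtureIm {a : ℝ} (ha : a ∈ Set.Ioo (0 : ℝ) 2) (t : ℝ) :
    IntegrableOn (mixtureIm a t) (Set.Ioi 0) := by
  refine IntegrableOn.congr_fun (((integrableOn_rpow_div_sq_add_sq ha one_pos).bdd_mul (c := 1)
    (f := fun r => r * t / (r ^ 2 + t ^ 2)) (Measurable.aestronglyMeasurable (by fun_prop))
    (.of_forall fun r => ?_)).const_mul (1 - t ^ 2))
    (fun r hr => (mixtureIm_eq_mul hr a).symm) measurableSet_Ioi
  rw [Real.norm_eq_abs, abs_div, abs_of_nonneg (by positivity : 0 ≤ r ^ 2 + t ^ 2)]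
  refine div_le_one_of_le₀ ?_ (by positivity)
  exact abs_le.2 ⟨by nlinarith [sq_nonneg (r + t)], by nlinarith [sq_nonneg (r - t)]⟩

theorem integral_mixtureIm_of_lt_one {a t : ℝ} (ha : a ∈ Set.Ioo (0 : ℝ) 1) (ht : 0 < t) :
    ∫ r in Set.Ioi (0 : ℝ), mixtureIm a t r = -(cauchyMellin a * skewPhase a t) := by
  have hq : a + 1 ∈ Set.Ioo (0 : ℝ) 2 := ⟨by linarith [ha.1], by linarith [ha.2]⟩
  have hsplit : Set.EqOn (mixtureIm a t) (fun r => t * (r ^ (a + 1 - 1) / (r ^ 2 + t ^ 2)) -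
      t * (r ^ (a + 1 - 1) / (r ^ 2 + 1 ^ 2))) (Set.Ioi 0) := fun r hr => by
    simp only [mixtureIm, add_sub_right_comm a, Real.rpow_add_one (ne_of_gt hr)]
    ring
  have hsin := sin_pi_mul_div_two_pos ⟨ha.1, ha.2.trans one_lt_two⟩
  have hcos : 0 < Real.cos (Real.pi * a / 2) := by
    refine Real.cos_pos_of_mem_Ioo ⟨?_, ?_⟩ <;> nlinarith [ha.1, ha.2, Real.pi_pos]
  rw [setIntegral_congr_fun measurableSet_Ioi hsplit,
    integral_sub ((integrableOn_rpow_div_sq_add_sq hq ht).const_mul t)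
      ((integrableOn_rpow_div_sq_add_sq hq one_pos).const_mul t),
    integral_const_mul, integral_const_mul, integral_rpow_div_sq_add_sq hq ht,
    integral_rpow_div_sq_add_sq hq one_pos, skewPhase_of_ne_one ha.2.ne, cauchyMellin,
    cauchyMellin, mul_add_one, add_div, Real.sin_add_pi_div_two, Real.tan_eq_sin_div_cos,
    Real.one_rpow, show a + 1 - 2 = a - 1 by ring, Real.rpow_sub_one ht.ne']
  field_simp
  ring

theorem integral_mixtureIm_of_one_lt {a t : ℝ} (ha : a ∈ Set.Ioo (1 : ℝ) 2) (ht : 0 < t) :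
    ∫ r in Set.Ioi (0 : ℝ), mixtureIm a t r = -(cauchyMellin a * skewPhase a t) := by
  have hq : a - 1 ∈ Set.Ioo (0 : ℝ) 2 := ⟨by linarith [ha.1], by linarith [ha.2]⟩
  have hsplit : Set.EqOn (mixtureIm a t) (fun r => t * (r ^ (a - 1 - 1) / (r ^ 2 + 1 ^ 2)) -
      t ^ 3 * (r ^ (a - 1 - 1) / (r ^ 2 + t ^ 2))) (Set.Ioi 0) := fun r (hr : 0 < r) => by
    simp only [mixtureIm, Real.rpow_sub_one hr.ne' (a - 1)]
    field_simp
    ring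
  have hsin := sin_pi_mul_div_two_pos ⟨one_pos.trans ha.1, ha.2⟩
  rw [setIntegral_congr_fun measurableSet_Ioi hsplit,
    integral_sub ((integrableOn_rpow_div_sq_add_sq hq one_pos).const_mul t)
      ((integrableOn_rpow_div_sq_add_sq hq ht).const_mul (t ^ 3)),
    integral_const_mul, integral_const_mul, integral_rpow_div_sq_add_sq hq ht,
    integral_rpow_div_sq_add_sq hq one_pos, skewPhase_of_ne_one ha.1.ne', cauchyMellin,
    cauchyMellin, mul_sub_one, sub_div, Real.sin_sub_pi_div_two, Real.tan_eq_sin_div_cos,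
    Real.one_rpow, show a - 1 - 2 = a - (3 : ℕ) by push_cast; ring, Real.rpow_sub_natCast ht.ne']
  field_simp
  ring

theorem hasDerivAt_log_sq_add_sq_div {t : ℝ} (ht : t ≠ 0) (r : ℝ) :
    HasDerivAt (fun r => t / 2 * Real.log ((r ^ 2 + t ^ 2) / (r ^ 2 + 1))) (mixtureIm 1 t r) r := by
  have hnum : HasDerivAt (fun r : ℝ => r ^ 2 + t ^ 2) (2 * r) r := by
    simpa using (hasDerivAt_pow 2 r).add_const (t ^ 2)
  have hden : HasDerivAt (fun r : ℝ => r ^ 2 + 1) (2 * r) r := by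
    simpa using (hasDerivAt_pow 2 r).add_const 1
  refine (((hnum.fun_div hden (by positivity)).log (by positivity)).const_mul
    (t / 2)).congr_deriv ?_
  rw [mixtureIm, sub_self, Real.rpow_zero]
  field_simp

theorem tendsto_log_sq_add_sq_div (t : ℝ) :
    Tendsto (fun r : ℝ => t / 2 * Real.log ((r ^ 2 + t ^ 2) / (r ^ 2 + 1))) atTop (𝓝 0) := by
  have hinv : Tendsto (fun r : ℝ => (r ^ 2 + 1)⁻¹) atTop (𝓝 0) :=
    (tendsto_atTop_add_const_right _ _ (tendsto_pow_atTop two_ne_zero)).inv_tendsto_atTop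
  have hquot : Tendsto (fun r : ℝ => (r ^ 2 + t ^ 2) / (r ^ 2 + 1)) atTop (𝓝 1) := by
    have hrw : (fun r : ℝ => (r ^ 2 + t ^ 2) / (r ^ 2 + 1)) =
        fun r => 1 + (t ^ 2 - 1) * (r ^ 2 + 1)⁻¹ := by
      funext r; field_simp; ring
    rw [hrw]
    simpa using (hinv.const_mul (t ^ 2 - 1)).const_add 1
  simpa using (hquot.log one_ne_zero).const_mul (t / 2)

theorem integral_mixtureIm_one {t : ℝ} (ht : 0 < t) :
    ∫ r in Set.Ioi (0 : ℝ), mixtureIm 1 t r = -(cauchyMellin 1 * skewPhase 1 t) := by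
  rw [integral_Ioi_of_hasDerivAt_of_tendsto
    (hasDerivAt_log_sq_add_sq_div ht.ne' 0).continuousAt.continuousWithinAt
    (fun r _ => hasDerivAt_log_sq_add_sq_div ht.ne' r)
    (integrableOn_mixtureIm ⟨one_pos, one_lt_two⟩ t) (tendsto_log_sq_add_sq_div t),
    skewPhase_one, cauchyMellin, mul_one, Real.sin_pi_div_two]
  simp only [ne_eq, OfNat.ofNat_ne_zero, not_false_eq_true, zero_pow, zero_add, div_one,
    Real.log_pow, Nat.cast_ofNat, zero_sub, mul_one, neg_inj]
  field_simp

theorem mixtureIm_neg (a t r : ℝ) : mixtureIm a (-t) r = -mixtureIm a t r := by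
  rw [mixtureIm, mixtureIm, neg_sq]
  ring

theorem integral_mixtureIm {a : ℝ} (ha : a ∈ Set.Ioo (0 : ℝ) 2) (t : ℝ) :
    ∫ r in Set.Ioi (0 : ℝ), mixtureIm a t r =
      -(cauchyMellin a * (Real.sign t * skewPhase a |t|)) := by
  have hpos : ∀ u : ℝ, 0 < u →
      ∫ r in Set.Ioi (0 : ℝ), mixtureIm a u r = -(cauchyMellin a * skewPhase a u) := fun u hu => by
    rcases lt_trichotomy a 1 with h | rfl | h
    · exact integral_mixtureIm_of_lt_one ⟨ha.1, h⟩ hu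
    · exact integral_mixtureIm_one hu
    · exact integral_mixtureIm_of_one_lt ⟨h, ha.2⟩ hu
  rcases lt_trichotomy t 0 with h | rfl | h
  · have hneg := hpos (-t) (neg_pos.2 h)
    simp only [mixtureIm_neg, integral_neg] at hneg
    rw [Real.sign_of_neg h, abs_of_neg h]
    linarith
  · simp [mixtureIm]
  · rw [Real.sign_of_pos h, abs_of_pos h, one_mul, hpos t h]

/-- The characteristic function of the two-sided exponential law of rate `r`, whose positive and
negative parts have masses `(1 + b) / 2` and `(1 - b) / 2`. -/
noncomputable def doubleExpCharFun (b r t : ℝ) : ℂ :=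
  (r ^ 2 + Complex.I * (b * r * t)) / (r ^ 2 + t ^ 2)

/-- The contribution of the jumps of rate `r` to the cumulant of the stable law, viewed as a mixture
of compensated compound Poisson laws with two-sided exponential jumps. -/
noncomputable def rateExponent (a b t r : ℝ) : ℂ :=
  ((r ^ (a - 1) / cauchyMellin a : ℝ) : ℂ) *
    (doubleExpCharFun b r t - 1 - Complex.I * t * ((b * (r / (r ^ 2 + 1)) : ℝ) : ℂ))

theorem rateExponent_eq {r : ℝ} (hr : 0 < r) (a b t : ℝ) :
    rateExponent a b t r = ((-(mixtureRe a t r / cauchyMellin a) : ℝ) : ℂ) +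
      Complex.I * ((b * mixtureIm a t r / cauchyMellin a : ℝ) : ℂ) := by
  have hne : (r : ℂ) ^ 2 + (t : ℂ) ^ 2 ≠ 0 := by
    exact_mod_cast (by positivity : r ^ 2 + t ^ 2 ≠ 0)
  have hre : doubleExpCharFun b r t - 1 = -(t ^ 2 / (r ^ 2 + t ^ 2)) +
      Complex.I * (b * (r * t / (r ^ 2 + t ^ 2))) := by
    rw [doubleExpCharFun]
    field_simp
    ring
  rw [rateExponent, mixtureRe, mixtureIm, hre]
  push_cast
  ring

theorem integrableOn_rateExponent {a : ℝ} (ha : a ∈ Set.Ioo (0 : ℝ) 2) (b t : ℝ) :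
    IntegrableOn (rateExponent a b t) (Set.Ioi 0) :=
  IntegrableOn.congr_fun (((integrableOn_mixtureRe ha t).div_const _).neg.ofReal.add
    ((((integrableOn_mixtureIm ha t).const_mul b).div_const _).ofReal.const_mul _))
    (fun _ hr => (rateExponent_eq hr a b t).symm) measurableSet_Ioi

theorem stableExponent_eq_integral_rateExponent {a : ℝ} (ha : a ∈ Set.Ioo (0 : ℝ) 2) (b t : ℝ) :
    stableExponent a b t = ∫ r in Set.Ioi (0 : ℝ), rateExponent a b t r := by
  have hJ := (cauchyMellin_pos ha).ne'
  rw [setIntegral_congr_fun measurableSet_Ioi fun _ hr => rateExponent_eq hr a b t,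
    integral_add ((integrableOn_mixtureRe ha t).div_const _).neg.ofReal
    ((((integrableOn_mixtureIm ha t).const_mul b).div_const _).ofReal.const_mul _),
    integral_const_mul, integral_complex_ofReal, integral_complex_ofReal, integral_neg,
    integral_div, integral_div, integral_const_mul, integral_mixtureRe ha, integral_mixtureIm ha,
    stableExponent, sub_eq_add_neg, ← mul_neg, ← Complex.ofReal_neg]
  congr 3 <;> field_simp

end ExponentialMixture

section JumpMeasure

/-- The density of the two-sided exponential law of rate `r`, whose positive and negative parts have
masses `(1 + b) / 2` and `(1 - b) / 2`. -/
noncomputable def doubleExpPDF (b r y : ℝ) : ℝ :=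
  r * Real.exp (-(r * |y|)) * if 0 < y then (1 + b) / 2 else (1 - b) / 2

theorem doubleExpPDF_nonneg {b r : ℝ} (hb : b ∈ Set.Icc (-1 : ℝ) 1) (hr : 0 ≤ r) (y : ℝ) :
    0 ≤ doubleExpPDF b r y := by
  have hpos : 0 ≤ 1 + b := by linarith [hb.1]
  have hneg : 0 ≤ 1 - b := by linarith [hb.2]
  unfold doubleExpPDF
  split_ifs <;> positivity

theorem doubleExpPDF_pos {b r : ℝ} (hb : b ∈ Set.Ioo (-1 : ℝ) 1) (hr : 0 < r) (y : ℝ) :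
    0 < doubleExpPDF b r y := by
  have hpos : 0 < 1 + b := by linarith [hb.1]
  have hneg : 0 < 1 - b := by linarith [hb.2]
  unfold doubleExpPDF
  split_ifs <;> positivity

theorem measurable_doubleExpPDF (b : ℝ) :
    Measurable fun p : ℝ × ℝ => doubleExpPDF b p.1 p.2 := by
  unfold doubleExpPDF
  exact Measurable.mul (by fun_prop)
    (.ite (measurableSet_lt measurable_const measurable_snd) measurable_const measurable_const)

theorem doubleExpPDF_mul_exp_of_pos {y : ℝ} (hy : 0 < y) (b r t : ℝ) :
    (doubleExpPDF b r y : ℂ) * Complex.exp (t * y * Complex.I) =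
      r * ((1 + b) / 2) * Complex.exp ((-r + t * Complex.I) * y) := by
  rw [doubleExpPDF, if_pos hy, abs_of_pos hy, add_mul, Complex.exp_add, mul_right_comm (t : ℂ),
    neg_mul]
  push_cast
  ring

theorem doubleExpPDF_mul_exp_of_nonpos {y : ℝ} (hy : y ≤ 0) (b r t : ℝ) :
    (doubleExpPDF b r y : ℂ) * Complex.exp (t * y * Complex.I) =
      r * ((1 - b) / 2) * Complex.exp ((r + t * Complex.I) * y) := by
  rw [doubleExpPDF, if_neg hy.not_gt, abs_of_nonpos hy, add_mul, Complex.exp_add,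
    mul_right_comm (t : ℂ), mul_neg, neg_neg]
  push_cast
  ring

theorem integrableOn_Ioi_doubleExpPDF_mul_exp {r : ℝ} (hr : 0 < r) (b t : ℝ) :
    IntegrableOn (fun y : ℝ => (doubleExpPDF b r y : ℂ) * Complex.exp (t * y * Complex.I))
      (Set.Ioi 0) :=
  IntegrableOn.congr_fun ((integrableOn_exp_mul_complex_Ioi
    (by simpa using hr : (-(r : ℂ) + t * Complex.I).re < 0) 0).const_mul _)
    (fun _ hy => (doubleExpPDF_mul_exp_of_pos hy b r t).symm) measurableSet_Ioi

theorem integrableOn_Iic_doubleExpPDF_mul_exp {r : ℝ} (hr : 0 < r) (b t : ℝ) :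
    IntegrableOn (fun y : ℝ => (doubleExpPDF b r y : ℂ) * Complex.exp (t * y * Complex.I))
      (Set.Iic 0) :=
  IntegrableOn.congr_fun ((integrableOn_exp_mul_complex_Iic
    (by simpa using hr : 0 < ((r : ℂ) + t * Complex.I).re) 0).const_mul _)
    (fun _ hy => (doubleExpPDF_mul_exp_of_nonpos hy b r t).symm) measurableSet_Iic

theorem integral_doubleExpPDF_mul_exp {r : ℝ} (hr : 0 < r) (b t : ℝ) :
    ∫ y : ℝ, (doubleExpPDF b r y : ℂ) * Complex.exp (t * y * Complex.I) =
      doubleExpCharFun b r t := by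
  have hre_neg : (-(r : ℂ) + t * Complex.I).re < 0 := by simpa using hr
  have hre_pos : 0 < ((r : ℂ) + t * Complex.I).re := by simpa using hr
  have hne_neg : -(r : ℂ) + t * Complex.I ≠ 0 := fun h => by simp [h] at hre_neg
  have hne_pos : (r : ℂ) + t * Complex.I ≠ 0 := fun h => by simp [h] at hre_pos
  have hfactor : (r : ℂ) ^ 2 + t ^ 2 = -((r + t * Complex.I) * (-r + t * Complex.I)) := by
    linear_combination t ^ 2 * Complex.I_sq
  rw [← intervalIntegral.integral_Iic_add_Ioi (integrableOn_Iic_doubleExpPDF_mul_exp hr b t)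
    (integrableOn_Ioi_doubleExpPDF_mul_exp hr b t),
    setIntegral_congr_fun measurableSet_Iic fun y hy => doubleExpPDF_mul_exp_of_nonpos hy b r t,
    setIntegral_congr_fun measurableSet_Ioi fun y hy => doubleExpPDF_mul_exp_of_pos hy b r t,
    integral_const_mul, integral_const_mul, integral_exp_mul_complex_Ioi hre_neg,
    integral_exp_mul_complex_Iic hre_pos, Complex.ofReal_zero, mul_zero, Complex.exp_zero,
    mul_zero, Complex.exp_zero, doubleExpCharFun, hfactor]
  field_simp
  ring

theorem integrable_doubleExpPDF {r : ℝ} (hr : 0 < r) (b : ℝ) : Integrable (doubleExpPDF b r) := by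
  have hint := (integrableOn_Iic_doubleExpPDF_mul_exp hr b 0).union
    (integrableOn_Ioi_doubleExpPDF_mul_exp hr b 0)
  rw [Set.Iic_union_Ioi, integrableOn_univ] at hint
  simpa using hint.re

theorem integral_doubleExpPDF {r : ℝ} (hr : 0 < r) (b : ℝ) : ∫ y, doubleExpPDF b r y = 1 := by
  have hint := integral_doubleExpPDF_mul_exp hr b 0
  have hr' : (r : ℂ) ≠ 0 := by exact_mod_cast hr.ne'
  simp only [Complex.ofReal_zero, zero_mul, Complex.exp_zero, mul_one, integral_complex_ofReal]
    at hint
  rw [doubleExpCharFun] at hint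
  simpa [hr'] using hint

theorem integrableOn_rpow_sub_one_div_cauchyMellin {a A : ℝ} (ha : 0 < a) (B : ℝ) :
    IntegrableOn (fun r : ℝ => r ^ (a - 1) / cauchyMellin a) (Set.Ioc A B) :=
  (intervalIntegral.intervalIntegrable_rpow' (a := A) (b := B) (by linarith)).1.div_const _

/-- The joint density of the rate and the size of the jumps in the representation of the stable
law as a mixture of compound Poisson laws. -/
noncomputable def jumpDensity (a b : ℝ) (p : ℝ × ℝ) : ℝ :=
  p.1 ^ (a - 1) / cauchyMellin a * doubleExpPDF b p.1 p.2

theorem measurable_jumpDensity (a b : ℝ) : Measurable (jumpDensity a b) :=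
  Measurable.mul (by fun_prop) (measurable_doubleExpPDF b)

/-- The Lévy measure of the jumps with rate in `(A, B]`. -/
noncomputable def jumpMeasure (a b A B : ℝ) : Measure ℝ :=
  (((volume.restrict (Set.Ioc A B)).prod volume).withDensity
    fun p => ENNReal.ofReal (jumpDensity a b p)).map Prod.snd

variable {a b A : ℝ}

theorem jumpDensity_nonneg (ha : a ∈ Set.Ioo (0 : ℝ) 2) (hb : b ∈ Set.Icc (-1 : ℝ) 1) {r : ℝ}
    (hr : 0 ≤ r) (y : ℝ) : 0 ≤ jumpDensity a b (r, y) :=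
  mul_nonneg (div_nonneg (Real.rpow_nonneg hr _) (cauchyMellin_pos ha).le)
    (doubleExpPDF_nonneg hb hr y)

theorem integrable_jumpDensity (ha : a ∈ Set.Ioo (0 : ℝ) 2) (hb : b ∈ Set.Icc (-1 : ℝ) 1)
    (hA : 0 ≤ A) (B : ℝ) :
    Integrable (jumpDensity a b) ((volume.restrict (Set.Ioc A B)).prod volume) := by
  rw [integrable_prod_iff (measurable_jumpDensity a b).aestronglyMeasurable]
  refine ⟨(ae_restrict_iff' measurableSet_Ioc).2 (.of_forall fun r hr =>
    (integrable_doubleExpPDF (hA.trans_lt hr.1) b).const_mul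
      (r ^ (a - 1) / cauchyMellin a)), ?_⟩
  refine IntegrableOn.congr_fun (integrableOn_rpow_sub_one_div_cauchyMellin ha.1 B)
    (fun r hr => ?_) measurableSet_Ioc
  have hr0 : 0 < r := hA.trans_lt hr.1
  simp only [Real.norm_of_nonneg (jumpDensity_nonneg ha hb hr0.le _)]
  simp only [jumpDensity, integral_const_mul, integral_doubleExpPDF hr0, mul_one]

theorem isFiniteMeasure_jumpMeasure (ha : a ∈ Set.Ioo (0 : ℝ) 2) (hb : b ∈ Set.Icc (-1 : ℝ) 1)
    (hA : 0 ≤ A) (B : ℝ) : IsFiniteMeasure (jumpMeasure a b A B) := by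
  have := isFiniteMeasure_withDensity_ofReal (integrable_jumpDensity ha hb hA B).2
  unfold jumpMeasure
  infer_instance

theorem integrable_jumpDensity_mul_exp (ha : a ∈ Set.Ioo (0 : ℝ) 2) (hb : b ∈ Set.Icc (-1 : ℝ) 1)
    (hA : 0 ≤ A) (B t : ℝ) :
    Integrable (fun p : ℝ × ℝ => (jumpDensity a b p : ℂ) * Complex.exp (t * p.2 * Complex.I))
      ((volume.restrict (Set.Ioc A B)).prod volume) := by
  refine (integrable_jumpDensity ha hb hA B).ofReal.mul_bdd (c := 1)
    (Continuous.aestronglyMeasurable (by fun_prop)) (.of_forall fun p => ?_)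
  rw [← Complex.ofReal_mul, Complex.norm_exp_ofReal_mul_I]

theorem integral_jumpDensity_mul_exp {r : ℝ} (hr : 0 < r) (a b t : ℝ) :
    ∫ y : ℝ, (jumpDensity a b (r, y) : ℂ) * Complex.exp (t * y * Complex.I) =
      ((r ^ (a - 1) / cauchyMellin a : ℝ) : ℂ) * doubleExpCharFun b r t := by
  simp only [jumpDensity, Complex.ofReal_mul _ (doubleExpPDF _ _ _), mul_assoc]
  rw [integral_const_mul, ← integral_doubleExpPDF_mul_exp hr]
  simp only [mul_assoc]

theorem integrableOn_mul_doubleExpCharFun (ha : a ∈ Set.Ioo (0 : ℝ) 2)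
    (hb : b ∈ Set.Icc (-1 : ℝ) 1) (hA : 0 ≤ A) (B t : ℝ) :
    IntegrableOn (fun r : ℝ => ((r ^ (a - 1) / cauchyMellin a : ℝ) : ℂ) * doubleExpCharFun b r t)
      (Set.Ioc A B) :=
  IntegrableOn.congr_fun (integrable_jumpDensity_mul_exp ha hb hA B t).integral_prod_left
    (fun _ hr => integral_jumpDensity_mul_exp (hA.trans_lt hr.1) a b t) measurableSet_Ioc

theorem charFun_jumpMeasure (ha : a ∈ Set.Ioo (0 : ℝ) 2) (hb : b ∈ Set.Icc (-1 : ℝ) 1)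
    (hA : 0 ≤ A) (B t : ℝ) :
    charFun (jumpMeasure a b A B) t =
      ∫ r in Set.Ioc A B, ((r ^ (a - 1) / cauchyMellin a : ℝ) : ℂ) * doubleExpCharFun b r t := by
  rw [charFun_apply_real, jumpMeasure, integral_map measurable_snd.aemeasurable
      (Measurable.aestronglyMeasurable (by fun_prop)),
    integral_withDensity_eq_integral_toReal_smul (measurable_jumpDensity a b).ennreal_ofReal
      (.of_forall fun _ => ENNReal.ofReal_lt_top),
    ← setIntegral_congr_fun measurableSet_Ioc fun r hr =>
      integral_jumpDensity_mul_exp (hA.trans_lt hr.1) a b t,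
    ← integral_prod _ (integrable_jumpDensity_mul_exp ha hb hA B t)]
  refine integral_congr_ae ?_
  filter_upwards [Measure.quasiMeasurePreserving_fst.ae (ae_restrict_mem measurableSet_Ioc)]
    with p hp
  rw [ENNReal.toReal_ofReal (jumpDensity_nonneg ha hb (hA.trans hp.1.le) p.2), Complex.real_smul]

theorem integrableOn_mul_div_sq_add_one {f : ℝ → ℝ} {s : Set ℝ} (hf : IntegrableOn f s) :
    IntegrableOn (fun r => f r * (r / (r ^ 2 + 1))) s := by
  refine Integrable.mul_bdd (c := 1) hf (Measurable.aestronglyMeasurable (by fun_prop))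
    (.of_forall fun r => ?_)
  rw [Real.norm_eq_abs, abs_div, abs_of_nonneg (by positivity : 0 ≤ r ^ 2 + 1)]
  refine div_le_one_of_le₀ (abs_le.2 ⟨?_, ?_⟩) (by positivity) <;> nlinarith

theorem exists_setIntegral_rateExponent_eq (ha : a ∈ Set.Ioo (0 : ℝ) 2)
    (hb : b ∈ Set.Icc (-1 : ℝ) 1) (hA : 0 ≤ A) (B : ℝ) :
    ∃ mass drift : ℝ, ∀ t : ℝ, ∫ r in Set.Ioc A B, rateExponent a b t r =
      charFun (jumpMeasure a b A B) t - mass - Complex.I * t * drift := by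
  let w : ℝ → ℝ := fun r => r ^ (a - 1) / cauchyMellin a
  have hmass : IntegrableOn w (Set.Ioc A B) := integrableOn_rpow_sub_one_div_cauchyMellin ha.1 B
  refine ⟨∫ r in Set.Ioc A B, w r, ∫ r in Set.Ioc A B, b * (w r * (r / (r ^ 2 + 1))), fun t => ?_⟩
  have hchar : IntegrableOn (fun r => (w r : ℂ) * doubleExpCharFun b r t) (Set.Ioc A B) :=
    integrableOn_mul_doubleExpCharFun ha hb hA B t
  have hmassC : IntegrableOn (fun r => (w r : ℂ)) (Set.Ioc A B) := hmass.ofReal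
  have hdiff : IntegrableOn (fun r => (w r : ℂ) * doubleExpCharFun b r t - w r) (Set.Ioc A B) :=
    hchar.sub hmassC
  have hdriftC : IntegrableOn
      (fun r => Complex.I * t * ((b * (w r * (r / (r ^ 2 + 1))) : ℝ) : ℂ)) (Set.Ioc A B) :=
    ((integrableOn_mul_div_sq_add_one hmass).const_mul b).ofReal.const_mul _
  calc ∫ r in Set.Ioc A B, rateExponent a b t r
      = ∫ r in Set.Ioc A B, ((w r : ℂ) * doubleExpCharFun b r t - w r -
          Complex.I * t * ((b * (w r * (r / (r ^ 2 + 1))) : ℝ) : ℂ)) := by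
        refine setIntegral_congr_fun measurableSet_Ioc fun r _ => ?_
        simp only [rateExponent, w]
        push_cast
        ring
    _ = _ := by
        rw [integral_sub hdiff hdriftC, integral_sub hchar hmassC,
          integral_const_mul, integral_complex_ofReal, integral_complex_ofReal,
          charFun_jumpMeasure ha hb hA]

theorem isOpenPosMeasure_jumpMeasure (ha : a ∈ Set.Ioo (0 : ℝ) 2) (hb : b ∈ Set.Ioo (-1 : ℝ) 1)
    (hA : 0 ≤ A) {B : ℝ} (hAB : A < B) : (jumpMeasure a b A B).IsOpenPosMeasure := by
  refine ⟨fun U hU hne hzero => ?_⟩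
  rw [jumpMeasure, Measure.map_apply measurable_snd hU.measurableSet,
    withDensity_apply_eq_zero (measurable_jumpDensity a b).ennreal_ofReal] at hzero
  have hsub : Set.Ioc A B ×ˢ U ⊆
      {p | ENNReal.ofReal (jumpDensity a b p) ≠ 0} ∩ Prod.snd ⁻¹' U := by
    rintro ⟨r, y⟩ ⟨hr, hy⟩
    have hr0 : 0 < r := hA.trans_lt hr.1
    exact ⟨(ENNReal.ofReal_pos.2 (mul_pos (div_pos (Real.rpow_pos_of_pos hr0 _)
      (cauchyMellin_pos ha)) (doubleExpPDF_pos hb hr0 y))).ne', hy⟩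
  have hnull := measure_mono_null hsub hzero
  rw [Measure.prod_prod, Measure.restrict_apply_self, Real.volume_Ioc, mul_eq_zero] at hnull
  rcases hnull with hrate | hjump
  · exact (ENNReal.ofReal_pos.2 (sub_pos.2 hAB)).ne' hrate
  · exact (hU.measure_pos volume hne).ne' hjump

end JumpMeasure

section FourierPositivity

open scoped FourierTransform ComplexOrder

theorem continuous_fourier {ψ : ℝ → ℂ} (hψ : Integrable ψ) : Continuous (𝓕 ψ) :=
  VectorFourier.fourierIntegral_continuous Real.continuous_fourierChar continuous_inner hψ

theorem fourier_const_mul (c : ℂ) (ψ : ℝ → ℂ) (w : ℝ) :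
    𝓕 (fun t => c * ψ t) w = c * 𝓕 ψ w := by
  simp only [Real.fourier_real_eq, Circle.smul_def, smul_eq_mul, mul_left_comm _ c]
  exact integral_const_mul c _

theorem integrable_fourier_sub {ψ : ℝ → ℂ} (hψ : Integrable ψ) (ν : Measure ℝ)
    [IsFiniteMeasure ν] (w c : ℝ) : Integrable (fun y => 𝓕 ψ (w - y / c)) ν :=
  Integrable.of_bound (C := ∫ t, ‖ψ t‖)
    ((continuous_fourier hψ).comp (by fun_prop)).aestronglyMeasurable
    (.of_forall fun _ => VectorFourier.norm_fourierIntegral_le_integral_norm _ _ _ _ _)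

theorem integrable_charFun_mul {ψ : ℝ → ℂ} (hψ : Integrable ψ) (ν : Measure ℝ)
    [IsFiniteMeasure ν] : Integrable fun t => charFun ν t * ψ t :=
  hψ.bdd_mul continuous_charFun.aestronglyMeasurable (.of_forall fun t => norm_charFun_le t)

theorem integrable_charFun_pow_mul {ψ : ℝ → ℂ} (hψ : Integrable ψ) (ν : Measure ℝ)
    [IsFiniteMeasure ν] (k : ℕ) : Integrable fun t => charFun ν t ^ k * ψ t := by
  induction k with
  | zero => simpa only [pow_zero, one_mul] using hψ
  | succ k ih => simpa only [pow_succ', mul_assoc] using integrable_charFun_mul ih ν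

theorem fourier_charFun_mul {ψ : ℝ → ℂ} (hψ : Integrable ψ) (ν : Measure ℝ) [IsFiniteMeasure ν]
    (w : ℝ) :
    𝓕 (fun t => charFun ν t * ψ t) w = ∫ y, 𝓕 ψ (w - y / (2 * Real.pi)) ∂ν := by
  simp only [Real.fourier_real_eq_integral_exp_smul, smul_eq_mul]
  have hint : Integrable (Function.uncurry fun (t y : ℝ) =>
      Complex.exp (((-2 * Real.pi * t * (w - y / (2 * Real.pi)) : ℝ) : ℂ) * Complex.I) * ψ t)
      (volume.prod ν) := by
    refine (hψ.comp_fst ν).bdd_mul (c := 1) (Measurable.aestronglyMeasurable (by fun_prop))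
      (.of_forall fun p => ?_)
    rw [Complex.norm_exp_ofReal_mul_I]
  rw [← integral_integral_swap hint]
  refine integral_congr_ae (.of_forall fun t => ?_)
  simp only
  rw [charFun_apply_real, integral_mul_const, ← mul_assoc, ← integral_const_mul]
  congr 2 with y
  rw [← Complex.exp_add]
  push_cast
  field_simp
  ring_nf

theorem hasSum_fourier_of_summable_integral_norm {F : ℕ → ℝ → ℂ} (hF : ∀ k, Integrable (F k))
    (hsum : Summable fun k => ∫ t, ‖F k t‖) (w : ℝ) :
    HasSum (fun k => 𝓕 (F k) w) (𝓕 (fun t => ∑' k, F k t) w) := by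
  simp only [Real.fourier_eq, ← tsum_const_smul']
  refine hasSum_integral_of_summable_integral_norm (fun k => ?_) ?_
  · exact (Real.fourierIntegral_convergent_iff w).2 (hF k)
  · simpa only [Circle.norm_smul] using hsum

theorem hasSum_fourier_exp_charFun_mul {ψ : ℝ → ℂ} (hψ : Integrable ψ) (ν : Measure ℝ)
    [IsFiniteMeasure ν] (w : ℝ) :
    HasSum (fun k : ℕ => (k.factorial : ℂ)⁻¹ * 𝓕 (fun t => charFun ν t ^ k * ψ t) w)
      (𝓕 (fun t => Complex.exp (charFun ν t) * ψ t) w) := by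
  have hint : ∀ k : ℕ, Integrable fun t => (k.factorial : ℂ)⁻¹ * (charFun ν t ^ k * ψ t) :=
    fun k => (integrable_charFun_pow_mul hψ ν k).const_mul _
  have hle : ∀ k : ℕ, ∫ t, ‖(k.factorial : ℂ)⁻¹ * (charFun ν t ^ k * ψ t)‖ ≤
      ν.real Set.univ ^ k / k.factorial * ∫ t, ‖ψ t‖ := by
    intro k
    rw [← integral_const_mul]
    refine integral_mono (hint k).norm (hψ.norm.const_mul _) fun t => ?_
    simp only [norm_mul, norm_pow, norm_inv, Complex.norm_natCast]
    rw [← mul_assoc, div_eq_inv_mul]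
    gcongr
    exact norm_charFun_le t
  have hsum := hasSum_fourier_of_summable_integral_norm hint
    (.of_nonneg_of_le (fun k => integral_nonneg fun t => norm_nonneg _) hle
      ((Real.summable_pow_div_factorial _).mul_right _)) w
  have hexp : ∀ t, ∑' k : ℕ, (k.factorial : ℂ)⁻¹ * (charFun ν t ^ k * ψ t) =
      Complex.exp (charFun ν t) * ψ t := by
    intro t
    rw [Complex.exp_eq_exp_ℂ, NormedSpace.exp_eq_tsum_div, ← tsum_mul_right]
    simp only [div_eq_inv_mul, mul_assoc]
  simpa only [hexp, fourier_const_mul] using hsum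

/-- The integrable functions with nonnegative Fourier transform, that is, up to normalization the
characteristic functions of bounded continuous probability densities. The inequality is that of
`ComplexOrder`, so it includes that the Fourier transform is real. -/
structure HasNonnegFourier (ψ : ℝ → ℂ) : Prop where
  integrable : Integrable ψ
  fourier_nonneg : ∀ w, 0 ≤ 𝓕 ψ w

namespace HasNonnegFourier

variable {ψ : ℝ → ℂ}

theorem const_mul (h : HasNonnegFourier ψ) {c : ℂ} (hc : 0 ≤ c) :
    HasNonnegFourier fun t => c * ψ t where
  integrable := h.integrable.const_mul c
  fourier_nonneg w := by
    rw [fourier_const_mul]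
    exact mul_nonneg hc (h.fourier_nonneg w)

theorem charFun_mul (h : HasNonnegFourier ψ) (ν : Measure ℝ) [IsFiniteMeasure ν] :
    HasNonnegFourier fun t => charFun ν t * ψ t where
  integrable := integrable_charFun_mul h.integrable ν
  fourier_nonneg w := by
    rw [fourier_charFun_mul h.integrable]
    exact integral_nonneg fun _ => h.fourier_nonneg _

theorem charFun_pow_mul (h : HasNonnegFourier ψ) (ν : Measure ℝ) [IsFiniteMeasure ν] (k : ℕ) :
    HasNonnegFourier fun t => charFun ν t ^ k * ψ t := by
  induction k with
  | zero => simpa only [pow_zero, one_mul] using h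
  | succ k ih => simpa only [pow_succ', mul_assoc] using ih.charFun_mul ν

theorem fourier_charFun_mul_le (h : HasNonnegFourier ψ) (ν : Measure ℝ) [IsFiniteMeasure ν]
    (w : ℝ) :
    𝓕 (fun t => charFun ν t * ψ t) w ≤ 𝓕 (fun t => Complex.exp (charFun ν t) * ψ t) w := by
  have hle := le_hasSum (hasSum_fourier_exp_charFun_mul h.integrable ν w) 1 fun k _ =>
    mul_nonneg (inv_nonneg.2 (Nat.cast_nonneg _)) ((h.charFun_pow_mul ν k).fourier_nonneg w)
  simpa only [Nat.factorial_one, Nat.cast_one, inv_one, one_mul, pow_one] using hle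

theorem exp_charFun_mul (h : HasNonnegFourier ψ) (ν : Measure ℝ) [IsFiniteMeasure ν] :
    HasNonnegFourier fun t => Complex.exp (charFun ν t) * ψ t where
  integrable := h.integrable.bdd_mul (c := Real.exp (ν.real Set.univ))
    (continuous_charFun.cexp).aestronglyMeasurable (.of_forall fun t => by
      rw [Complex.norm_exp]
      exact Real.exp_le_exp.2 ((Complex.re_le_norm _).trans (norm_charFun_le t)))
  fourier_nonneg w :=
    ((h.charFun_mul ν).fourier_nonneg w).trans (h.fourier_charFun_mul_le ν w)

theorem re_fourier_exp_charFun_mul_pos (h : HasNonnegFourier ψ) {z : ℝ} (hz : 𝓕 ψ z ≠ 0)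
    (ν : Measure ℝ) [IsFiniteMeasure ν] [ν.IsOpenPosMeasure] (w : ℝ) :
    0 < (𝓕 (fun t => Complex.exp (charFun ν t) * ψ t) w).re := by
  refine lt_of_lt_of_le ?_ (Complex.le_def.1 (h.fourier_charFun_mul_le ν w)).1
  have hint := integrable_fourier_sub h.integrable ν w (2 * Real.pi)
  have hcont : Continuous fun y => (𝓕 ψ (w - y / (2 * Real.pi))).re :=
    Complex.continuous_re.comp ((continuous_fourier h.integrable).comp (by fun_prop))
  have hzre : (𝓕 ψ z).re ≠ 0 := fun h0 => hz (Complex.ext h0 (h.fourier_nonneg z).2.symm)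
  rw [fourier_charFun_mul h.integrable, ← RCLike.re_eq_complex_re, ← integral_re hint]
  refine (integral_pos_iff_support_of_nonneg (fun y => (h.fourier_nonneg _).1) hint.re).2 ?_
  refine hcont.isOpen_support.measure_pos ν ⟨2 * Real.pi * (w - z), ?_⟩
  rwa [Function.mem_support, mul_div_cancel_left₀ _ Real.two_pi_pos.ne', sub_sub_cancel]

theorem of_tendsto_of_dominated {ψ' : ℕ → ℝ → ℂ} {bound : ℝ → ℝ}
    (h : ∀ n, HasNonnegFourier (ψ' n)) (hbound : Integrable bound)
    (hle : ∀ n t, ‖ψ' n t‖ ≤ bound t) (hlim : ∀ t, Tendsto (ψ' · t) atTop (𝓝 (ψ t))) :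
    HasNonnegFourier ψ where
  integrable := hbound.mono'
    (aestronglyMeasurable_of_tendsto_ae atTop (fun n => (h n).integrable.1) (.of_forall hlim))
    (.of_forall fun t => le_of_tendsto' (hlim t).norm fun n => hle n t)
  fourier_nonneg w := by
    have hconv : Tendsto (fun n => 𝓕 (ψ' n) w) atTop (𝓝 (𝓕 ψ w)) := by
      simp only [Real.fourier_eq]
      refine tendsto_integral_of_dominated_convergence bound
        (fun n => ((Real.fourierIntegral_convergent_iff w).2 (h n).integrable).1) hbound
        (fun n => .of_forall fun t => ?_) (.of_forall fun t => (hlim t).const_smul _)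
      rw [Circle.norm_smul]
      exact hle n t
    exact ge_of_tendsto' hconv fun n => (h n).fourier_nonneg w

end HasNonnegFourier

theorem hasNonnegFourier_gaussian {ε : ℝ} (hε : 0 < ε) :
    HasNonnegFourier fun t : ℝ => Complex.exp (-Real.pi * ε * t ^ 2) where
  integrable := by
    have := integrable_cexp_neg_mul_sq (b := (Real.pi * ε : ℝ))
      (by rw [Complex.ofReal_re]; positivity)
    simpa only [neg_mul, Complex.ofReal_mul] using this
  fourier_nonneg w := by
    have hgauss : 𝓕 (fun t : ℝ => Complex.exp (-Real.pi * ε * t ^ 2)) w =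
        ((1 / ε ^ (1 / 2 : ℝ) * Real.exp (-Real.pi / ε * w ^ 2) : ℝ) : ℂ) := by
      rw [fourier_gaussian_pi (b := ε) hε]
      push_cast [Complex.ofReal_cpow hε.le]
      rfl
    rw [hgauss, Complex.zero_le_real]
    positivity

end FourierPositivity

section StablePositivity

open scoped FourierTransform ComplexOrder

variable {a b A : ℝ} {ψ : ℝ → ℂ}

theorem re_rateExponent_nonpos (ha : a ∈ Set.Ioo (0 : ℝ) 2) {r : ℝ} (hr : 0 < r) (b t : ℝ) :
    (rateExponent a b t r).re ≤ 0 := by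
  have hre : (rateExponent a b t r).re = -(mixtureRe a t r / cauchyMellin a) := by
    rw [rateExponent_eq hr]
    simp
  have hmix : 0 ≤ mixtureRe a t r := by unfold mixtureRe; positivity
  rw [hre, neg_nonpos]
  exact div_nonneg hmix (cauchyMellin_pos ha).le

theorem re_setIntegral_rateExponent_nonpos (ha : a ∈ Set.Ioo (0 : ℝ) 2) {s : Set ℝ}
    (hs : MeasurableSet s) (hpos : s ⊆ Set.Ioi 0) (b t : ℝ) :
    (∫ r in s, rateExponent a b t r).re ≤ 0 := by
  rw [← RCLike.re_eq_complex_re, ← integral_re ((integrableOn_rateExponent ha b t).mono_set hpos)]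
  exact setIntegral_nonpos hs fun r hr => re_rateExponent_nonpos ha (hpos hr) b t

theorem norm_exp_setIntegral_rateExponent_le_one (ha : a ∈ Set.Ioo (0 : ℝ) 2) {s : Set ℝ}
    (hs : MeasurableSet s) (hpos : s ⊆ Set.Ioi 0) (b t : ℝ) :
    ‖Complex.exp (∫ r in s, rateExponent a b t r)‖ ≤ 1 := by
  rw [Complex.norm_exp, Real.exp_le_one_iff]
  exact re_setIntegral_rateExponent_nonpos ha hs hpos b t

theorem continuous_setIntegral_rateExponent (ha : a ∈ Set.Ioo (0 : ℝ) 2)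
    (hb : b ∈ Set.Icc (-1 : ℝ) 1) (hA : 0 ≤ A) (B : ℝ) :
    Continuous fun t => ∫ r in Set.Ioc A B, rateExponent a b t r := by
  obtain ⟨mass, drift, hexp⟩ := exists_setIntegral_rateExponent_eq ha hb hA B
  have := isFiniteMeasure_jumpMeasure ha hb hA B
  simp only [hexp]
  fun_prop

theorem exists_le_re_setIntegral_rateExponent (ha : a ∈ Set.Ioo (0 : ℝ) 2)
    (hb : b ∈ Set.Icc (-1 : ℝ) 1) (hA : 0 ≤ A) (B : ℝ) :
    ∃ C : ℝ, ∀ t, C ≤ (∫ r in Set.Ioc A B, rateExponent a b t r).re := by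
  obtain ⟨mass, drift, hexp⟩ := exists_setIntegral_rateExponent_eq ha hb hA B
  have := isFiniteMeasure_jumpMeasure ha hb hA B
  refine ⟨-(jumpMeasure a b A B).real Set.univ - mass, fun t => ?_⟩
  have hre : (∫ r in Set.Ioc A B, rateExponent a b t r).re =
      (charFun (jumpMeasure a b A B) t).re - mass := by
    simp [hexp]
  rw [hre]
  gcongr
  exact (abs_le.1 ((Complex.abs_re_le_norm _).trans (norm_charFun_le t))).1

theorem exists_exp_setIntegral_rateExponent_eq (ha : a ∈ Set.Ioo (0 : ℝ) 2)
    (hb : b ∈ Set.Icc (-1 : ℝ) 1) (hA : 0 ≤ A) (B : ℝ) :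
    ∃ c d : ℝ, 0 < c ∧ ∀ t, Complex.exp (∫ r in Set.Ioc A B, rateExponent a b t r) =
      c * (Complex.exp (charFun (jumpMeasure a b A B) t) * charFun (Measure.dirac d) t) := by
  obtain ⟨mass, drift, hexp⟩ := exists_setIntegral_rateExponent_eq ha hb hA B
  refine ⟨Real.exp (-mass), -drift, Real.exp_pos _, fun t => ?_⟩
  rw [charFun_dirac, hexp, Complex.ofReal_exp, ← Complex.exp_add, ← Complex.exp_add]
  congr 1
  simp only [RCLike.inner_apply, conj_trivial]
  push_cast
  ring

namespace HasNonnegFourier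

theorem exp_setIntegral_Ioc_mul (h : HasNonnegFourier ψ) (ha : a ∈ Set.Ioo (0 : ℝ) 2)
    (hb : b ∈ Set.Icc (-1 : ℝ) 1) (hA : 0 ≤ A) (B : ℝ) :
    HasNonnegFourier fun t => Complex.exp (∫ r in Set.Ioc A B, rateExponent a b t r) * ψ t := by
  obtain ⟨c, d, hc, hexp⟩ := exists_exp_setIntegral_rateExponent_eq ha hb hA B
  have := isFiniteMeasure_jumpMeasure ha hb hA B
  simpa only [hexp, mul_assoc] using ((h.charFun_mul (Measure.dirac d)).exp_charFun_mul
    (jumpMeasure a b A B)).const_mul (Complex.zero_le_real.2 hc.le)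

theorem exp_integral_Ioi_mul (h : HasNonnegFourier ψ) (ha : a ∈ Set.Ioo (0 : ℝ) 2)
    (hb : b ∈ Set.Icc (-1 : ℝ) 1) (hA : 0 ≤ A) :
    HasNonnegFourier fun t => Complex.exp (∫ r in Set.Ioi A, rateExponent a b t r) * ψ t := by
  refine of_tendsto_of_dominated (fun n : ℕ => h.exp_setIntegral_Ioc_mul ha hb hA (A + n))
    h.integrable.norm (fun n t => ?_) fun t => ?_
  · rw [norm_mul]
    exact mul_le_of_le_one_left (norm_nonneg _) (norm_exp_setIntegral_rateExponent_le_one ha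
      measurableSet_Ioc (fun r hr => hA.trans_lt hr.1) b t)
  · have hlim := intervalIntegral_tendsto_integral_Ioi A
      ((integrableOn_rateExponent ha b t).mono_set (Set.Ioi_subset_Ioi hA))
      (tendsto_atTop_add_const_left atTop A tendsto_natCast_atTop_atTop)
    simp only [intervalIntegral.integral_of_le (le_add_of_nonneg_right (Nat.cast_nonneg _))]
      at hlim
    exact hlim.cexp.mul_const _

theorem of_forall_mul_gaussian (hψ : Integrable ψ)
    (h : ∀ ε : ℝ, 0 < ε →
      HasNonnegFourier fun t => ψ t * Complex.exp (-Real.pi * ε * t ^ 2)) :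
    HasNonnegFourier ψ := by
  refine of_tendsto_of_dominated (fun n : ℕ => h (1 / (n + 1)) (by positivity)) hψ.norm
    (fun n t => ?_) fun t => ?_
  · rw [norm_mul]
    refine mul_le_of_le_one_right (norm_nonneg _) ?_
    have hexp : (-Real.pi * (1 / (n + 1) : ℝ) * t ^ 2 : ℂ) =
        ((-(Real.pi * (1 / (n + 1)) * t ^ 2) : ℝ) : ℂ) := by push_cast; ring
    rw [hexp, Complex.norm_exp_ofReal, Real.exp_le_one_iff, neg_nonpos]
    positivity
  · have hε : Tendsto (fun n : ℕ => ((1 / (n + 1) : ℝ) : ℂ)) atTop (𝓝 0) := by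
      exact_mod_cast (Complex.continuous_ofReal.tendsto 0).comp
        tendsto_one_div_add_atTop_nhds_zero_nat
    simpa using (((hε.const_mul (-Real.pi : ℂ)).mul_const ((t : ℂ) ^ 2)).cexp).const_mul (ψ t)

end HasNonnegFourier

theorem exp_integral_Ioi_rateExponent (ha : a ∈ Set.Ioo (0 : ℝ) 2) (hA : 0 ≤ A) (b t : ℝ) :
    Complex.exp (∫ r in Set.Ioi A, rateExponent a b t r) =
      Complex.exp (-∫ r in Set.Ioc 0 A, rateExponent a b t r) *
        Complex.exp (stableExponent a b t) := by
  have hint := integrableOn_rateExponent ha b t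
  rw [← Complex.exp_add, stableExponent_eq_integral_rateExponent ha,
    ← Set.Ioc_union_Ioi_eq_Ioi hA, setIntegral_union (Set.Ioc_disjoint_Ioi le_rfl)
      measurableSet_Ioi (hint.mono_set Set.Ioc_subset_Ioi_self)
      (hint.mono_set (Set.Ioi_subset_Ioi hA)), neg_add_cancel_left]

theorem integrable_exp_integral_Ioi_rateExponent (ha : a ∈ Set.Ioo (0 : ℝ) 2)
    (hb : b ∈ Set.Icc (-1 : ℝ) 1) (hA : 0 ≤ A) :
    Integrable fun t => Complex.exp (∫ r in Set.Ioi A, rateExponent a b t r) := by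
  obtain ⟨C, hC⟩ := exists_le_re_setIntegral_rateExponent ha hb le_rfl A
  simp only [exp_integral_Ioi_rateExponent ha hA]
  refine (integrable_exp_stableExponent ha.1 b).bdd_mul (c := Real.exp (-C))
    (continuous_setIntegral_rateExponent ha hb le_rfl A).neg.cexp.aestronglyMeasurable
    (.of_forall fun t => ?_)
  rw [Complex.norm_exp, Complex.neg_re]
  gcongr
  exact hC t

theorem hasNonnegFourier_exp_integral_Ioi_rateExponent (ha : a ∈ Set.Ioo (0 : ℝ) 2)
    (hb : b ∈ Set.Icc (-1 : ℝ) 1) (hA : 0 ≤ A) :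
    HasNonnegFourier fun t => Complex.exp (∫ r in Set.Ioi A, rateExponent a b t r) :=
  .of_forall_mul_gaussian (integrable_exp_integral_Ioi_rateExponent ha hb hA) fun _ hε =>
    (hasNonnegFourier_gaussian hε).exp_integral_Ioi_mul ha hb hA

theorem continuousAt_stableExponent (a b : ℝ) {t : ℝ} (ht : 0 < t) :
    ContinuousAt (stableExponent a b) t := by
  have heq : stableExponent a b =ᶠ[𝓝 t] fun u =>
      ((-(u ^ a) : ℝ) : ℂ) - Complex.I * ((b * skewPhase a u : ℝ) : ℂ) := by
    filter_upwards [lt_mem_nhds ht] with u hu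
    rw [stableExponent, abs_of_pos hu, Real.sign_of_pos hu, mul_one]
  have hskew : ContinuousAt (skewPhase a) t := by
    unfold skewPhase
    split_ifs <;> fun_prop (disch := first | positivity | exact Or.inl ht.ne')
  rw [continuousAt_congr heq]
  fun_prop (disch := exact Or.inl ht.ne')

theorem exists_fourier_ne_zero (hψ : Integrable ψ) {t : ℝ} (hcont : ContinuousAt ψ t)
    (ht : ψ t ≠ 0) : ∃ w, 𝓕 ψ w ≠ 0 := by
  by_contra! hzero
  have hfourier : 𝓕 ψ = 0 := funext hzero
  have hinv := hψ.fourierInv_fourier_eq (by rw [hfourier]; exact integrable_zero _ _ _) hcont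
  rw [hfourier, Real.fourierInv_eq'] at hinv
  exact ht (by simpa using hinv.symm)

theorem continuousAt_exp_integral_Ioi_rateExponent (ha : a ∈ Set.Ioo (0 : ℝ) 2)
    (hb : b ∈ Set.Icc (-1 : ℝ) 1) (hA : 0 ≤ A) {t : ℝ} (ht : 0 < t) :
    ContinuousAt (fun t => Complex.exp (∫ r in Set.Ioi A, rateExponent a b t r)) t := by
  simp only [exp_integral_Ioi_rateExponent ha hA]
  exact (continuous_setIntegral_rateExponent ha hb le_rfl A).neg.cexp.continuousAt.mul
    (continuousAt_stableExponent a b ht).cexp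

theorem re_fourier_exp_stableExponent_pos (ha : a ∈ Set.Ioo (0 : ℝ) 2)
    (hb : b ∈ Set.Ioo (-1 : ℝ) 1) (w : ℝ) :
    0 < (𝓕 (fun t => Complex.exp (stableExponent a b t)) w).re := by
  have hb' := Set.Ioo_subset_Icc_self hb
  have := isFiniteMeasure_jumpMeasure ha hb' le_rfl 1
  have := isOpenPosMeasure_jumpMeasure ha hb le_rfl one_pos
  obtain ⟨c, d, hc, hexp⟩ := exists_exp_setIntegral_rateExponent_eq ha hb' le_rfl 1
  set rest : ℝ → ℂ := fun t =>
    charFun (Measure.dirac d) t * Complex.exp (∫ r in Set.Ioi 1, rateExponent a b t r) with hrest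
  have hnonneg : HasNonnegFourier rest :=
    (hasNonnegFourier_exp_integral_Ioi_rateExponent ha hb' zero_le_one).charFun_mul _
  obtain ⟨z, hz⟩ : ∃ z, 𝓕 rest z ≠ 0 := by
    refine exists_fourier_ne_zero hnonneg.integrable (t := 1)
      (continuous_charFun.continuousAt.mul
        (continuousAt_exp_integral_Ioi_rateExponent ha hb' zero_le_one one_pos)) ?_
    simp only [hrest, charFun_dirac]
    exact mul_ne_zero (Complex.exp_ne_zero _) (Complex.exp_ne_zero _)
  have hfactor : ∀ t, Complex.exp (stableExponent a b t) =
      c * (Complex.exp (charFun (jumpMeasure a b 0 1) t) * rest t) := fun t => by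
    rw [hrest, ← mul_assoc, ← mul_assoc, mul_assoc (c : ℂ), ← hexp,
      exp_integral_Ioi_rateExponent ha zero_le_one, Complex.exp_neg,
      mul_inv_cancel_left₀ (Complex.exp_ne_zero _)]
  simp only [hfactor, fourier_const_mul, Complex.re_ofReal_mul]
  exact mul_pos hc (hnonneg.re_fourier_exp_charFun_mul_pos hz _ w)

theorem fM_ne_zero {θ : Fin 4 → ℝ} (hθ : θ ∈ ThetaInt) (x : ℝ) : fM θ x ≠ 0 := by
  obtain ⟨hσ, hα, hβ⟩ := hθ
  have hpos := re_fourier_exp_stableExponent_pos hα hβ ((x - θ 0) / (2 * Real.pi * θ 1))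
  rw [fM_eq_fourier hσ]
  positivity

end StablePositivity

section PartialDerivatives

variable {ι X F : Type*} [DecidableEq ι] [NormedAddCommGroup X] [NormedSpace ℝ X]
  [NormedAddCommGroup F] [NormedSpace ℝ F]

theorem hasDerivAt_comp_update [Finite ι] {G : X × (ι → ℝ) → F} {p : X × (ι → ℝ)}
    (hG : DifferentiableAt ℝ G p) (j : ι) :
    HasDerivAt (fun s => G (p.1, Function.update p.2 j s)) (fderiv ℝ G p (0, Pi.single j 1))
      (p.2 j) := by
  have := Fintype.ofFinite ι
  have hcurve : HasDerivAt (fun s => (p.1, Function.update p.2 j s))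
      ((0 : X), (Pi.single j 1 : ι → ℝ)) (p.2 j) :=
    (hasDerivAt_const _ _).prodMk (hasDerivAt_update p.2 j (p.2 j))
  have hfderiv : HasFDerivAt G (fderiv ℝ G p) (p.1, Function.update p.2 j (p.2 j)) := by
    rw [Function.update_eq_self]
    exact hG.hasFDerivAt
  exact hfderiv.comp_hasDerivAt _ hcurve

theorem hasDerivAt_comp_prodMk_right {G : ℝ × X → F} {p : ℝ × X} (hG : DifferentiableAt ℝ G p) :
    HasDerivAt (fun y => G (y, p.2)) (fderiv ℝ G p (1, 0)) p.1 :=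
  hG.hasFDerivAt.comp_hasDerivAt p.1 ((hasDerivAt_id p.1).prodMk (hasDerivAt_const _ _))

variable {m n : WithTop ℕ∞}

theorem contDiffOn_deriv_comp_update [Fintype ι] {G : X × (ι → ℝ) → F} {U : Set (X × (ι → ℝ))}
    (hU : IsOpen U) (hG : ContDiffOn ℝ n G U) (hmn : m + 1 ≤ n) (j : ι) :
    ContDiffOn ℝ m (fun p => deriv (fun s => G (p.1, Function.update p.2 j s)) (p.2 j)) U := by
  refine ((hG.fderiv_of_isOpen hU hmn).clm_apply
    (contDiffOn_const (c := ((0 : X), (Pi.single j 1 : ι → ℝ))))).congr fun p hp => ?_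
  exact (hasDerivAt_comp_update (((hG.of_le hmn).differentiableOn (by simp)).differentiableAt
    (hU.mem_nhds hp)) j).deriv

theorem contDiffOn_deriv_comp_prodMk_right {G : ℝ × X → F} {U : Set (ℝ × X)} (hU : IsOpen U)
    (hG : ContDiffOn ℝ n G U) (hmn : m + 1 ≤ n) :
    ContDiffOn ℝ m (fun p => deriv (fun y => G (y, p.2)) p.1) U := by
  refine ((hG.fderiv_of_isOpen hU hmn).clm_apply
    (contDiffOn_const (c := ((1 : ℝ), (0 : X))))).congr fun p hp => ?_
  exact (hasDerivAt_comp_prodMk_right (((hG.of_le hmn).differentiableOn (by simp)).differentiableAt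
    (hU.mem_nhds hp))).deriv

end PartialDerivatives

section Scores

theorem contDiffOn_fP (n : ℕ) (i : Fin 4) : ContDiffOn ℝ n
    (fun p : ℝ × (Fin 4 → ℝ) => fP i p.2 p.1) {p | p.2 ∈ ThetaInt} :=
  contDiffOn_deriv_comp_update isOpen_setOf_snd_mem_thetaInt (contDiffOn_fM (n + 1)) le_rfl i

theorem contDiffOn_ellP (n : ℕ) (i : Fin 4) : ContDiffOn ℝ n
    (fun p : ℝ × (Fin 4 → ℝ) => ellP i p.2 p.1) {p | p.2 ∈ ThetaInt} :=
  (contDiffOn_fP n i).div (contDiffOn_fM n) fun p hp => fM_ne_zero hp p.1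

theorem contDiffOn_ellPX (n : ℕ) (i : Fin 4) : ContDiffOn ℝ n
    (fun p : ℝ × (Fin 4 → ℝ) => ellPX i p.2 p.1) {p | p.2 ∈ ThetaInt} :=
  contDiffOn_deriv_comp_prodMk_right isOpen_setOf_snd_mem_thetaInt (contDiffOn_ellP (n + 1) i)
    le_rfl

theorem contDiffOn_ellPP (n : ℕ) (i j : Fin 4) : ContDiffOn ℝ n
    (fun p : ℝ × (Fin 4 → ℝ) => ellPP i j p.2 p.1) {p | p.2 ∈ ThetaInt} :=
  contDiffOn_deriv_comp_update isOpen_setOf_snd_mem_thetaInt (contDiffOn_ellP (n + 1) i) le_rfl j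

theorem differentiableAt_ellP {θ : Fin 4 → ℝ} (hθ : θ ∈ ThetaInt) (x : ℝ) (i : Fin 4) :
    DifferentiableAt ℝ (fun p : ℝ × (Fin 4 → ℝ) => ellP i p.2 p.1) (x, θ) :=
  ((contDiffOn_ellP 1 i).differentiableOn one_ne_zero).differentiableAt
    (isOpen_setOf_snd_mem_thetaInt.mem_nhds hθ)

end Scores

/-- For every `θ ∈ Θ_M°` and every `x ∈ ℝ`, the score functions
`ℓ_{θᵢ}(x;θ) = f_{θᵢ}(x;θ)/f(x;θ)`, their `x`-derivatives and their parameter derivatives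
are well-defined (the density is nonvanishing and the relevant derivatives exist), and
all of these functions are jointly continuous in `(x, θ)` on `ℝ × Θ_M°`. -/
theorem scores_wellDefined_jointly_continuous :
    (∀ θ ∈ ThetaInt, ∀ x : ℝ, fM θ x ≠ 0) ∧
    (∀ θ ∈ ThetaInt, ∀ x : ℝ, ∀ i : Fin 4,
      DifferentiableAt ℝ (fun y => ellP i θ y) x) ∧
    (∀ θ ∈ ThetaInt, ∀ x : ℝ, ∀ i j : Fin 4,
      DifferentiableAt ℝ (fun s => ellP i (Function.update θ j s) x) (θ j)) ∧
    (∀ i : Fin 4, ContinuousOn (fun p : ℝ × (Fin 4 → ℝ) => ellP i p.2 p.1)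
      {p : ℝ × (Fin 4 → ℝ) | p.2 ∈ ThetaInt}) ∧
    (∀ i : Fin 4, ContinuousOn (fun p : ℝ × (Fin 4 → ℝ) => ellPX i p.2 p.1)
      {p : ℝ × (Fin 4 → ℝ) | p.2 ∈ ThetaInt}) ∧
    (∀ i j : Fin 4, ContinuousOn (fun p : ℝ × (Fin 4 → ℝ) => ellPP i j p.2 p.1)
      {p : ℝ × (Fin 4 → ℝ) | p.2 ∈ ThetaInt}) := by
  refine ⟨fun θ hθ => fM_ne_zero hθ, ?_, ?_, fun i => (contDiffOn_ellP 0 i).continuousOn,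
    fun i => (contDiffOn_ellPX 0 i).continuousOn, fun i j => (contDiffOn_ellPP 0 i j).continuousOn⟩
  · exact fun θ hθ x i =>
      (hasDerivAt_comp_prodMk_right (differentiableAt_ellP hθ x i)).differentiableAt
  · exact fun θ hθ x i j =>
      (hasDerivAt_comp_update (differentiableAt_ellP hθ x i) j).differentiableAt
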